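/- arXiv:1712.10208 — 4 statements merged into one kernel-verified Lean document; each statement's English description precedes it below -/
import Mathlib

section
/- Let d ≥ 1 be an integer, p > d, q > 0, and r₀ > 0. Suppose u : [r₀, ∞) → ℝ is continuously differentiable, nonincreasing, nonnegative, u(r₀) = 1, lim_{r→∞} u(r) = 0, and the function r ↦ r^{d−1}|u'(r)|^{p−2}u'(r) is differentiable on (r₀, ∞) with derivative r^{d−1} u(r)^q at every r > r₀. Then the integral ∫_{r₀}^∞ r^{d−1} u(r)^q dr is finite and r₀^{d−1} |u'(r₀)|^{p−1} = ∫_{r₀}^∞ r^{d−1} u(r)^q dr. -/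
open Filter Set Topology MeasureTheory

/-- For the exterior Dirichlet problem for `Δ_p u = u^q` on `(r₀,∞)`
with `u(r₀)=1`, `u(∞)=0`, the weighted integral of `u^q` is finite and equals the
boundary flux `r₀^{d-1} |u'(r₀)|^{p-1}`. -/
theorem stmt3 (d : ℕ) (hd : 1 ≤ d) (p q r₀ : ℝ) (hp : (d : ℝ) < p) (hq : 0 < q)
    (hr₀ : 0 < r₀)
    (u u' : ℝ → ℝ)
    (hderiv : ∀ r ∈ Ici r₀, HasDerivWithinAt u (u' r) (Ici r₀) r)
    (hu'c : ContinuousOn u' (Ici r₀))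
    (hmono : AntitoneOn u (Ici r₀))
    (hnonneg : ∀ r ∈ Ici r₀, 0 ≤ u r)
    (hur₀ : u r₀ = 1)
    (hlim : Tendsto u atTop (𝓝 0))
    (hode : ∀ r ∈ Ioi r₀,
      HasDerivAt (fun s => s ^ (d - 1) * |u' s| ^ (p - 2) * u' s)
        (r ^ (d - 1) * u r ^ q) r) :
    IntegrableOn (fun r => r ^ (d - 1) * u r ^ q) (Ioi r₀) ∧
    r₀ ^ (d - 1) * |u' r₀| ^ (p - 1) = ∫ r in Ioi r₀, r ^ (d - 1) * u r ^ q := by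
  have hd1 : (1:ℝ) ≤ d := by exact_mod_cast hd
  have hp1 : 0 < p - 1 := by linarith
  have hneg : ∀ r ∈ Ici r₀, u' r ≤ 0 := by
    intro r hr
    rw [← (hderiv r hr).derivWithin (uniqueDiffOn_Ici r₀ r hr)]
    exact hmono.derivWithin_nonpos
  set F : ℝ → ℝ := fun s => s ^ (d - 1) * |u' s| ^ (p - 2) * u' s with hF
  have hFeq : ∀ s ∈ Ici r₀, F s = -(s ^ (d - 1) * |u' s| ^ (p - 1)) := by
    intro s hs
    have h0 := hneg s hs
    simp only [hF]
    rcases h0.eq_or_lt with h | h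
    · rw [h]; simp [Real.zero_rpow hp1.ne']
    · have e : p - 1 = (p - 2) + 1 := by ring
      rw [e, Real.rpow_add_one (abs_pos.mpr h.ne).ne']
      nth_rewrite 3 [abs_of_neg h]
      ring
  have hpos : ∀ s ∈ Ici r₀, 0 < s := fun s hs => lt_of_lt_of_le hr₀ hs
  have hFc : ContinuousOn F (Ici r₀) := by
    have : ContinuousOn (fun s => -(s ^ (d - 1) * |u' s| ^ (p - 1))) (Ici r₀) := by
      refine ContinuousOn.neg (ContinuousOn.mul (by fun_prop) ?_)
      exact hu'c.abs.rpow_const (fun _ _ => Or.inr hp1.le)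
    exact this.congr hFeq
  have hF'n : ∀ r ∈ Ioi r₀, 0 ≤ r ^ (d - 1) * u r ^ q := by
    intro r hr
    have h1 := hpos r (Ioi_subset_Ici_self hr)
    have h2 := hnonneg r (Ioi_subset_Ici_self hr)
    positivity
  have hFm : MonotoneOn F (Ici r₀) := by
    apply monotoneOn_of_deriv_nonneg (convex_Ici r₀) hFc
    · intro r hr
      rw [interior_Ici] at hr
      exact (hode r hr).differentiableAt.differentiableWithinAt
    · intro r hr
      rw [interior_Ici] at hr
      rw [(hode r hr).deriv]
      exact hF'n r hr
  have hFn : ∀ s ∈ Ici r₀, F s ≤ 0 := by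
    intro s hs
    rw [hFeq s hs]
    have := hpos s hs
    have : 0 ≤ s ^ (d - 1) * |u' s| ^ (p - 1) := by positivity
    linarith
  have key : ∀ ε > 0, ∃ s ∈ Ici r₀, -ε < F s := by
    intro ε hε
    by_contra! hcon
    set c : ℝ := ε ^ (1 / (p - 1)) with hc
    have hc0 : 0 < c := by positivity
    set M := max r₀ 1
    have hMr : r₀ ≤ M := le_max_left _ _
    have hM1 : 1 ≤ M := le_max_right _ _
    have hbd : ∀ s ∈ Ici M, u' s + c * s⁻¹ ≤ 0 := by
      intro s hs
      have hs0 : s ∈ Ici r₀ := le_trans hMr hs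
      have hs1 : 1 ≤ s := le_trans hM1 hs
      have hsp := hpos s hs0
      have h1 := hcon s hs0
      rw [hFeq s hs0] at h1
      have h2 : s ^ (d - 1) ≤ s ^ (p - 1) := by
        rw [← Real.rpow_natCast]
        apply Real.rpow_le_rpow_of_exponent_le hs1
        rw [Nat.cast_sub hd]; push_cast; linarith
      have h3 : ε ≤ (s * |u' s|) ^ (p - 1) := by
        rw [Real.mul_rpow hsp.le (abs_nonneg _)]
        have := mul_le_mul_of_nonneg_right h2 (Real.rpow_nonneg (abs_nonneg (u' s)) (p - 1))
        linarith
      have h4 : c ≤ s * |u' s| := by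
        have h5 := Real.rpow_le_rpow hε.le h3 (z := 1 / (p - 1)) (by positivity)
        rwa [← Real.rpow_mul (by positivity), mul_one_div_cancel hp1.ne', Real.rpow_one] at h5
      rw [abs_of_nonpos (hneg s hs0)] at h4
      have h6 : c * s⁻¹ ≤ - u' s := by
        rw [← div_eq_mul_inv, div_le_iff₀ hsp]; linarith
      linarith
    have hder : ∀ s ∈ Ioi M, HasDerivAt (fun s => u s + c * Real.log s) (u' s + c * s⁻¹) s := by
      intro s hs
      have hs' : r₀ < s := lt_of_le_of_lt hMr hs
      exact ((hderiv s hs'.le).hasDerivAt (Ici_mem_nhds hs')).add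
        ((Real.hasDerivAt_log (hr₀.trans hs').ne').const_mul c)
    have hanti : AntitoneOn (fun s => u s + c * Real.log s) (Ici M) := by
      apply antitoneOn_of_deriv_nonpos (convex_Ici M)
      · apply ContinuousOn.add
        · intro s hs
          exact ((hderiv s (le_trans hMr hs)).continuousWithinAt).mono (Ici_subset_Ici.mpr hMr)
        · apply ContinuousOn.mul continuousOn_const
          apply Real.continuousOn_log.mono
          intro s hs
          exact (hpos s (le_trans hMr hs)).ne'
      · intro r hr
        rw [interior_Ici] at hr
        exact (hder r hr).differentiableAt.differentiableWithinAt
      · intro r hr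
        rw [interior_Ici] at hr
        rw [(hder r hr).deriv]
        exact hbd r (Ioi_subset_Ici_self hr)
    have ht : Tendsto (fun s => u s + c * Real.log s) atTop atTop :=
      hlim.add_atTop (Real.tendsto_log_atTop.const_mul_atTop hc0)
    obtain ⟨s, hs1, hs2⟩ := ((ht.eventually_gt_atTop (u M + c * Real.log M)).and
      (eventually_ge_atTop M)).exists
    have := hanti self_mem_Ici hs2 hs2
    simp only at this
    linarith
  have htend : Tendsto F atTop (𝓝 0) := by
    rw [Metric.tendsto_atTop]
    intro ε hε
    obtain ⟨s, hs, h⟩ := key ε hε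
    refine ⟨s, fun n hn => ?_⟩
    have hn0 : n ∈ Ici r₀ := le_trans hs hn
    rw [Real.dist_eq, sub_zero, abs_of_nonpos (hFn n hn0)]
    have := hFm hs hn0 hn
    linarith
  have hc0 : ContinuousWithinAt F (Ici r₀) r₀ := hFc r₀ self_mem_Ici
  refine ⟨integrableOn_Ioi_deriv_of_nonneg hc0 hode hF'n htend, ?_⟩
  rw [integral_Ioi_of_hasDerivAt_of_nonneg hc0 hode hF'n htend, hFeq r₀ self_mem_Ici]
  ring
end

section
/- Let d ≥ 1 be an integer and p > d, q > 0 real numbers. There exists a continuously differentiable, nonincreasing, nonnegative function u : (0,∞) → ℝ with lim_{r→0⁺} u(r) = 1 and lim_{r→∞} u(r) = 0, such that the function r ↦ r^{d−1}|u'(r)|^{p−2}u'(r) is differentiable on (0,∞) with derivative r^{d−1} u(r)^q at every r > 0, u'(r) < 0 at every r with u(r) > 0, the integrals ∫_0^∞ r^{d−1}|u'(r)|^p dr, ∫_0^∞ r^{d−1} u(r)^{q+1} dr and ∫_0^∞ r^{d−1} u(r)^q dr are all finite, and ∫_0^∞ r^{d−1}|u'(r)|^p dr + ∫_0^∞ r^{d−1}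 u(r)^{q+1} dr = lim_{r→0⁺} r^{d−1}|u'(r)|^{p−1} = ∫_0^∞ r^{d−1} u(r)^q dr. -/
open Filter Set Topology MeasureTheory

lemma aux_mvt {F F' : ℝ → ℝ} {s t A B : ℝ} (hst : s ≤ t)
    (hd : ∀ x ∈ Icc s t, HasDerivWithinAt F (F' x) (Icc s t) x)
    (hA : ∀ x ∈ Icc s t, F' x ≤ -A) (hB : ∀ x ∈ Icc s t, -B ≤ F' x) :
    A * (t - s) ≤ F s - F t ∧ F s - F t ≤ B * (t - s) := by
  rcases hst.eq_or_lt with rfl | h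
  · simp
  · obtain ⟨c, hc, hc'⟩ := exists_hasDerivAt_eq_slope F F' h
      (fun x hx => (hd x hx).continuousWithinAt)
      (fun x hx => (hd x (Ioo_subset_Icc_self hx)).hasDerivAt (Icc_mem_nhds hx.1 hx.2))
    have hpos : 0 < t - s := sub_pos.2 h
    rw [eq_div_iff hpos.ne'] at hc'
    have h1 := hA c (Ioo_subset_Icc_self hc)
    have h2 := hB c (Ioo_subset_Icc_self hc)
    constructor <;> nlinarith

lemma aux_ineq {h f g U W : ℝ → ℝ} {N : ℝ}
    (hm : Monotone h) (fm : Monotone f) (h0 : ∀ x, 0 ≤ h x) (f0 : ∀ x, 0 ≤ f x)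
    (gm : MonotoneOn g (Ici 0)) (g0 : ∀ t, 0 ≤ t → 0 ≤ g t)
    (hU : ∀ t ∈ Icc 0 N, HasDerivWithinAt U (-h (W t)) (Icc 0 N) t)
    (hW : ∀ t ∈ Icc 0 N, HasDerivWithinAt W (-(g t * f (U t))) (Icc 0 N) t) :
    ∀ s t, 0 ≤ s → s ≤ t → t ≤ N →
      (h (W t) * (t - s) ≤ U s - U t ∧ U s - U t ≤ h (W s) * (t - s)) ∧
      (g s * f (U t) * (t - s) ≤ W s - W t ∧ W s - W t ≤ g t * f (U s) * (t - s)) := by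
  have hU' : ∀ s t, 0 ≤ s → t ≤ N → ∀ x ∈ Icc s t,
      HasDerivWithinAt U (-h (W x)) (Icc s t) x := fun s t hs ht x hx =>
    (hU x ⟨hs.trans hx.1, hx.2.trans ht⟩).mono (Icc_subset_Icc hs ht)
  have hW' : ∀ s t, 0 ≤ s → t ≤ N → ∀ x ∈ Icc s t,
      HasDerivWithinAt W (-(g x * f (U x))) (Icc s t) x := fun s t hs ht x hx =>
    (hW x ⟨hs.trans hx.1, hx.2.trans ht⟩).mono (Icc_subset_Icc hs ht)
  have anti : ∀ {F F' : ℝ → ℝ} {s t : ℝ}, s ≤ t → (∀ x ∈ Icc s t, HasDerivWithinAt F (F' x) (Icc s t) x) →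
      (∀ x ∈ Icc s t, F' x ≤ 0) → F t ≤ F s := by
    intro F F' s t hst hd hn
    have : AntitoneOn F (Icc s t) := by
      apply antitoneOn_of_hasDerivWithinAt_nonpos (f' := F') (convex_Icc s t)
        (fun x hx => (hd x hx).continuousWithinAt)
      · intro x hx
        exact (hd x (interior_subset hx)).mono interior_subset
      · intro x hx
        exact hn x (interior_subset hx)
    exact this (left_mem_Icc.2 hst) (right_mem_Icc.2 hst) hst
  have aU : ∀ s t, 0 ≤ s → s ≤ t → t ≤ N → U t ≤ U s := fun s t hs hst ht =>
    anti hst (hU' s t hs ht) (fun x _ => neg_nonpos.2 (h0 _))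
  have aW : ∀ s t, 0 ≤ s → s ≤ t → t ≤ N → W t ≤ W s := fun s t hs hst ht =>
    anti hst (hW' s t hs ht) (fun x hx => neg_nonpos.2 (mul_nonneg (g0 _ (hs.trans hx.1)) (f0 _)))
  intro s t hs hst ht
  refine ⟨aux_mvt hst (hU' s t hs ht) ?_ ?_, aux_mvt hst (hW' s t hs ht) ?_ ?_⟩
  · exact fun x hx => neg_le_neg (hm (aW x t (hs.trans hx.1) hx.2 ht))
  · exact fun x hx => neg_le_neg (hm (aW s x hs hx.1 (hx.2.trans ht)))
  · intro x hx
    apply neg_le_neg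
    apply mul_le_mul (gm hs (hs.trans hx.1) hx.1) (fm (aU x t (hs.trans hx.1) hx.2 ht)) (f0 _)
      (g0 _ (hs.trans hx.1))
  · intro x hx
    apply neg_le_neg
    apply mul_le_mul (gm (hs.trans hx.1) (hs.trans hst) hx.2) (fm (aU s x hs hx.1 (hx.2.trans ht))) (f0 _)
      (g0 _ (hs.trans hst))

lemma core_lip {h f g : ℝ → ℝ} {N ε H : ℝ} {Kh Kf : NNReal} (hN : 3 ≤ N)
    (hε : 0 < ε) (hε1 : ε < 1)
    (hL : LipschitzWith Kh h) (fL : LipschitzWith Kf f)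
    (hm : Monotone h) (fm : Monotone f) (h0 : ∀ x, 0 ≤ h x) (f0 : ∀ x, 0 ≤ f x)
    (hH : ∀ x, h x ≤ H) (f1 : ∀ x, f x ≤ 1)
    (hz : ∀ x, x ≤ ε → h x = 0) (fz : ∀ x, x ≤ ε → f x = 0)
    (hhalf : ∀ x, 1 ≤ x → 1 / 2 ≤ h x)
    (gc : Continuous g) (gm : MonotoneOn g (Ici 0)) (g0 : ∀ t, 0 ≤ t → 0 ≤ g t) :
    ∃ U W : ℝ → ℝ, U 0 = 1 ∧
      (∀ t, 0 ≤ t → t ≤ N → ε ≤ U t ∧ U t ≤ 1 ∧ ε ≤ W t ∧ W t ≤ 1 + 3 * g 3) ∧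
      ∀ s t, 0 ≤ s → s ≤ t → t ≤ N →
      (h (W t) * (t - s) ≤ U s - U t ∧ U s - U t ≤ h (W s) * (t - s)) ∧
      (g s * f (U t) * (t - s) ≤ W s - W t ∧ W s - W t ≤ g t * f (U s) * (t - s)) := by
  have hN0 : (0:ℝ) ≤ N := by linarith
  have hg3 := g0 3 (by norm_num)
  have hgN := g0 N hN0
  have hH0 : 0 ≤ H := (h0 0).trans (hH 0)
  set M : ℝ := 1 + 3 * g 3 with hM
  have hM0 : 0 ≤ M := by positivity
  let v : ℝ → ℝ × ℝ → ℝ × ℝ := fun t x => (-h x.2, -(g t * f x.1))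
  let G : NNReal := ⟨g N, hgN⟩
  let L : NNReal := ⟨max H (g N), le_max_of_le_left hH0⟩
  let r : NNReal := ⟨M, hM0⟩
  let a : NNReal := r + L * ⟨N, hN0⟩
  have pl : IsPicardLindelof v (tmin := 0) (tmax := N) ⟨0, ⟨le_rfl, hN0⟩⟩ ((1:ℝ), (0:ℝ)) a r L
      (max Kh (G * Kf)) := by
    refine ⟨?_, ?_, ?_, ?_⟩
    · intro t ht
      apply LipschitzWith.lipschitzOnWith
      apply LipschitzWith.prodMk
      · have h1 : LipschitzWith Kh (fun x : ℝ × ℝ => h x.2) := by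
          have := hL.comp (LipschitzWith.prod_snd (α := ℝ) (β := ℝ))
          rwa [mul_one] at this
        exact h1.neg
      · have h1 : LipschitzWith Kf (fun x : ℝ × ℝ => f x.1) := by
          have := fL.comp (LipschitzWith.prod_fst (α := ℝ) (β := ℝ))
          rwa [mul_one] at this
        refine LipschitzWith.of_dist_le_mul fun x y => ?_
        have := h1.dist_le_mul x y
        rw [Real.dist_eq] at this ⊢
        rw [show -(g t * f x.1) - -(g t * f y.1) = -(g t * (f x.1 - f y.1)) by ring, abs_neg, abs_mul,
          abs_of_nonneg (g0 t ht.1)]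
        have h2 : g t ≤ g N := gm ht.1 hN0 ht.2
        calc _ ≤ g N * (Kf * dist x y) := by gcongr
          _ = _ := by rw [NNReal.coe_mul, mul_assoc]; rfl
    · intro x hx
      apply Continuous.continuousOn
      simp only [v]
      fun_prop
    · intro t ht x hx
      simp only [v, Prod.norm_def, norm_neg, Real.norm_eq_abs, L]
      apply max_le_max
      · rw [abs_of_nonneg (h0 _)]; exact hH _
      · rw [abs_of_nonneg (mul_nonneg (g0 _ ht.1) (f0 _))]
        have h2 : g t ≤ g N := gm ht.1 hN0 ht.2
        have := mul_le_mul h2 (f1 x.1) (f0 _) hgN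
        simpa using this
    · have : ((a : NNReal) : ℝ) = r + L * N := rfl
      simp [this, hN0]
  obtain ⟨sol, hsol, L', hL'⟩ := pl.exists_forall_mem_closedBall_eq_hasDerivWithinAt_lipschitzOnWith
  have hball : ∀ b : Icc (0:ℝ) M, ((1:ℝ), (b:ℝ)) ∈ Metric.closedBall ((1:ℝ), (0:ℝ)) r := by
    intro b
    have hr : (r : ℝ) = M := rfl
    simp [Prod.dist_eq, abs_of_nonneg b.2.1, hr, hM0, b.2.2]
  let U : Icc (0:ℝ) M → ℝ → ℝ := fun b t => (sol (1, (b:ℝ)) t).1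
  let W : Icc (0:ℝ) M → ℝ → ℝ := fun b t => (sol (1, (b:ℝ)) t).2
  have U0 : ∀ b, U b 0 = 1 := fun b => by
    have := (hsol _ (hball b)).1
    simp only at this
    simp [U, this]
  have W0 : ∀ b, W b 0 = b := fun b => by
    have := (hsol _ (hball b)).1
    simp only at this
    simp [W, this]
  have dU : ∀ b, ∀ t ∈ Icc 0 N, HasDerivWithinAt (U b) (-h (W b t)) (Icc 0 N) t := fun b t ht =>
    (((ContinuousLinearMap.fst ℝ ℝ ℝ).hasFDerivAt).comp_hasDerivWithinAt t ((hsol _ (hball b)).2 t ht))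
  have dW : ∀ b, ∀ t ∈ Icc 0 N, HasDerivWithinAt (W b) (-(g t * f (U b t))) (Icc 0 N) t := fun b t ht =>
    (((ContinuousLinearMap.snd ℝ ℝ ℝ).hasFDerivAt).comp_hasDerivWithinAt t ((hsol _ (hball b)).2 t ht))
  have cs : ∀ t ∈ Icc 0 N, Continuous (fun b : Icc (0:ℝ) M => sol (1, (b:ℝ)) t) := by
    intro t ht
    have := (hL' t ht).continuousOn
    exact this.comp_continuous (by fun_prop) hball
  have ineq := fun b => aux_ineq hm fm h0 f0 gm g0 (dU b) (dW b)
  have aU : ∀ b s t, 0 ≤ s → s ≤ t → t ≤ N → U b t ≤ U b s := fun b s t hs hst ht => by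
    have := (ineq b s t hs hst ht).1.1
    have := mul_nonneg (h0 (W b t)) (sub_nonneg.2 hst)
    linarith
  have aW : ∀ b s t, 0 ≤ s → s ≤ t → t ≤ N → W b t ≤ W b s := fun b s t hs hst ht => by
    have := (ineq b s t hs hst ht).2.1
    have := mul_nonneg (mul_nonneg (g0 s hs) (f0 (U b t))) (sub_nonneg.2 hst)
    linarith
  let A : Set (Icc (0:ℝ) M) := ⋃ t ∈ Icc 0 N, {b | U b t < ε}
  let B : Set (Icc (0:ℝ) M) := ⋃ t ∈ Icc 0 N, {b | W b t < ε}
  have oA : IsOpen A := isOpen_biUnion fun t ht => isOpen_lt (cs t ht).fst continuous_const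
  have oB : IsOpen B := isOpen_biUnion fun t ht => isOpen_lt (cs t ht).snd continuous_const
  have nA : A.Nonempty := by
    refine ⟨⟨M, hM0, le_rfl⟩, ?_⟩
    simp only [A, mem_iUnion, mem_ofPred_eq]
    refine ⟨3, ⟨by norm_num, hN⟩, ?_⟩
    set b : Icc (0:ℝ) M := ⟨M, hM0, le_rfl⟩
    have h1 := (ineq b 0 3 le_rfl (by norm_num) hN).2.2
    have h2 := (ineq b 0 3 le_rfl (by norm_num) hN).1.1
    rw [W0] at h1
    rw [U0] at h2
    have h3 : g 3 * f (U b 0) ≤ g 3 * 1 := mul_le_mul_of_nonneg_left (f1 _) hg3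
    have h4 : 1 ≤ W b 3 := by
      have : (b:ℝ) = 1 + 3 * g 3 := rfl
      linarith
    have := hhalf _ h4
    linarith
  have nB : B.Nonempty := by
    refine ⟨⟨0, le_rfl, hM0⟩, ?_⟩
    simp only [B, mem_iUnion, mem_ofPred_eq]
    exact ⟨0, ⟨le_rfl, hN0⟩, by rw [W0]; exact hε⟩
  have disj : ¬ (A ∩ B).Nonempty := by
    rintro ⟨b, hA, hB⟩
    simp only [A, B, mem_iUnion, mem_ofPred_eq] at hA hB
    obtain ⟨t1, ht1, hA⟩ := hA
    obtain ⟨t2, ht2, hB⟩ := hB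
    have cU : ContinuousOn (U b) (Icc 0 t1) := fun x hx =>
      (dU b x ⟨hx.1, hx.2.trans ht1.2⟩).continuousWithinAt.mono (Icc_subset_Icc le_rfl ht1.2)
    obtain ⟨σ, hσ, hσe⟩ := intermediate_value_Icc' ht1.1 cU
      (show ε ∈ Icc (U b t1) (U b 0) from ⟨hA.le, by rw [U0]; exact hε1.le⟩)
    have hWσ : ε < W b σ := by
      by_contra hcon
      have := (ineq b σ t1 hσ.1 hσ.2 ht1.2).1.2
      rw [hz _ (not_lt.1 hcon)] at this
      linarith
    rcases le_total t2 σ with h2 | h2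
    · have := aW b t2 σ ht2.1 h2 (hσ.2.trans ht1.2)
      linarith
    · have := (ineq b σ t2 hσ.1 h2 ht2.2).2.2
      rw [fz _ hσe.le] at this
      linarith
  have : ∃ b, b ∉ A ∪ B := by
    by_contra hcon
    push Not at hcon
    have : PreconnectedSpace (Icc (0:ℝ) M) := isPreconnected_iff_preconnectedSpace.1 isPreconnected_Icc
    exact disj (nonempty_inter oA oB (eq_univ_of_forall hcon) nA nB)
  obtain ⟨b, hb⟩ := this
  simp only [A, B, mem_union, mem_iUnion, mem_ofPred_eq, not_or, not_exists, not_lt] at hb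
  refine ⟨U b, W b, U0 b, fun t h1 h2 => ⟨hb.1 t ⟨h1, h2⟩, ?_, hb.2 t ⟨h1, h2⟩, ?_⟩, ineq b⟩
  · have := aU b 0 t le_rfl h1 h2
    rwa [U0] at this
  · have := aW b 0 t le_rfl h1 h2
    rw [W0] at this
    exact this.trans b.2.2

lemma clamp_facts {ε M α : ℝ} (hε : 0 < ε) (hM : ε ≤ M) (hα : 0 < α) :
    ∃ h : ℝ → ℝ, (∃ K : NNReal, LipschitzWith K h) ∧ Monotone h ∧ (∀ x, 0 ≤ h x) ∧
      (∀ x, h x ≤ M ^ α) ∧ (∀ x, x ≤ ε → h x = 0) ∧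
      (∀ x, ε ≤ x → x ≤ M → h x = x ^ α - ε ^ α) := by
  have hcl : ∀ x : ℝ, max ε (min x M) ∈ Icc ε M := fun x =>
    ⟨le_max_left _ _, max_le hM (min_le_right _ _)⟩
  have hmono : ∀ x y : ℝ, 0 ≤ x → x ≤ y → x ^ α ≤ y ^ α := fun x y hx hxy =>
    Real.rpow_le_rpow hx hxy hα.le
  refine ⟨fun x => (max ε (min x M)) ^ α - ε ^ α, ?_, ?_, ?_, ?_, ?_, ?_⟩
  · have hc : ContDiffOn ℝ 1 (fun x : ℝ => x ^ α) (Icc ε M) := by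
      intro x hx
      exact (Real.contDiffAt_rpow_const_of_ne (hε.trans_le hx.1).ne').contDiffWithinAt
    obtain ⟨K, hK⟩ := hc.exists_lipschitzOnWith one_ne_zero (convex_Icc ε M) isCompact_Icc
    refine ⟨K, LipschitzWith.of_dist_le_mul fun x y => ?_⟩
    have h1 := hK.dist_le_mul _ (hcl x) _ (hcl y)
    have h2 : dist (max ε (min x M)) (max ε (min y M)) ≤ dist x y := by
      have : LipschitzWith 1 (fun x : ℝ => max ε (min x M)) :=
        (LipschitzWith.id.min_const M).const_max ε
      simpa using this.dist_le_mul x y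
    rw [dist_sub_right]
    exact h1.trans (by gcongr)
  · intro x y hxy
    simp only
    have : max ε (min x M) ≤ max ε (min y M) := by gcongr
    linarith [hmono _ _ (hε.le.trans (hcl x).1) this]
  · intro x
    linarith [hmono _ _ hε.le (hcl x).1]
  · intro x
    linarith [hmono _ _ (hε.le.trans (hcl x).1) (hcl x).2, Real.rpow_nonneg hε.le α]
  · intro x hx
    simp [max_eq_left ((min_le_left x M).trans hx)]
  · intro x h1 h2
    simp [min_eq_left h2, max_eq_right h1]

lemma approx {α q : ℝ} (hα : 0 < α) (hq : 0 < q) {g : ℝ → ℝ}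
    (gc : Continuous g) (gm : MonotoneOn g (Ici 0)) (g0 : ∀ t, 0 ≤ t → 0 ≤ g t) (n : ℕ) :
    ∃ (ε : ℝ) (U W : ℝ → ℝ), 0 < ε ∧ ε < 1 / ((n : ℝ) + 1) ∧ U 0 = 1 ∧
      (∀ t, 0 ≤ t → t ≤ (n : ℝ) + 3 → 0 ≤ U t ∧ U t ≤ 1 ∧ 0 ≤ W t ∧ W t ≤ 1 + 3 * g 3) ∧
      ∀ s t, 0 ≤ s → s ≤ t → t ≤ (n : ℝ) + 3 →
      (((W t) ^ α - ε ^ α) * (t - s) ≤ U s - U t ∧ U s - U t ≤ ((W s) ^ α - ε ^ α) * (t - s)) ∧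
      (g s * ((U t) ^ q - ε ^ q) * (t - s) ≤ W s - W t ∧
        W s - W t ≤ g t * ((U s) ^ q - ε ^ q) * (t - s)) := by
  have hn : (0:ℝ) < 1 / ((n : ℝ) + 1) := by positivity
  have hev : ∀ᶠ ε : ℝ in 𝓝[>] 0, ε ^ α < 1 / 2 := by
    have : Tendsto (fun ε : ℝ => ε ^ α) (𝓝[>] 0) (𝓝 ((0:ℝ) ^ α)) :=
      ((Real.continuous_rpow_const hα.le).tendsto 0).mono_left nhdsWithin_le_nhds
    rw [Real.zero_rpow hα.ne'] at this
    exact this.eventually (gt_mem_nhds (by norm_num))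
  obtain ⟨ε, h1, hε, h2⟩ := (hev.and (Ioo_mem_nhdsGT hn)).exists
  have hε1 : ε < 1 := h2.trans_le (by
    rw [div_le_one (by positivity)]; linarith [(Nat.cast_nonneg n : (0:ℝ) ≤ n)])
  have hg3 := g0 3 (by norm_num)
  obtain ⟨h, ⟨Kh, hL⟩, hm, h0, hH, hz, he⟩ := clamp_facts (M := 1 + 3 * g 3) hε (by linarith) hα
  obtain ⟨f, ⟨Kf, fL⟩, fm, f0, f1, fz, fe⟩ := clamp_facts (M := 1) hε hε1.le hq
  rw [Real.one_rpow] at f1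
  have hhalf : ∀ x, 1 ≤ x → 1 / 2 ≤ h x := by
    intro x hx
    have := he 1 hε1.le (by linarith)
    rw [Real.one_rpow] at this
    linarith [hm hx]
  obtain ⟨U, W, hU0, hb, hi⟩ := core_lip (N := (n:ℝ) + 3) (by linarith [(Nat.cast_nonneg n : (0:ℝ) ≤ n)])
    hε hε1 hL fL hm fm h0 f0 hH f1 hz fz hhalf gc gm g0
  refine ⟨ε, U, W, hε, h2, hU0, ?_, ?_⟩
  · intro t a b
    obtain ⟨p1, p2, p3, p4⟩ := hb t a b
    exact ⟨by linarith, p2, by linarith, p4⟩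
  · intro s t hs hst ht
    obtain ⟨p1, p2, p3, p4⟩ := hb t (hs.trans hst) ht
    obtain ⟨q1, q2, q3, q4⟩ := hb s hs (hst.trans ht)
    have := hi s t hs hst ht
    rw [he _ p3 p4, he _ q3 q4, fe _ p1 p2, fe _ q1 q2] at this
    exact this

lemma limit_sol {α q : ℝ} (hα : 0 < α) (hq : 0 < q) {g : ℝ → ℝ}
    (gc : Continuous g) (gm : MonotoneOn g (Ici 0)) (g0 : ∀ t, 0 ≤ t → 0 ≤ g t) :
    ∃ (U W : ℝ → ℝ), U 0 = 1 ∧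
      (∀ t, 0 ≤ t → 0 ≤ U t ∧ U t ≤ 1 ∧ 0 ≤ W t ∧ W t ≤ 1 + 3 * g 3) ∧
      ∀ s t, 0 ≤ s → s ≤ t →
      ((W t) ^ α * (t - s) ≤ U s - U t ∧ U s - U t ≤ (W s) ^ α * (t - s)) ∧
      (g s * (U t) ^ q * (t - s) ≤ W s - W t ∧ W s - W t ≤ g t * (U s) ^ q * (t - s)) := by
  choose ε U W hε hε' hU0 hb hi using approx hα hq gc gm g0
  let F : Ultrafilter ℕ := hyperfilter ℕ
  have hF : (F : Filter ℕ) ≤ atTop := by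
    rw [← Nat.cofinite_eq_atTop]; exact hyperfilter_le_cofinite
  have hev : ∀ t : ℝ, ∀ᶠ n : ℕ in (F : Filter ℕ), t ≤ (n : ℝ) + 3 := by
    intro t
    apply hF
    filter_upwards [tendsto_natCast_atTop_atTop.eventually_ge_atTop t] with n hn
    linarith
  have hlim : ∀ (V : ℕ → ℝ) (C : ℝ), (∀ᶠ n in (F : Filter ℕ), V n ∈ Icc 0 C) →
      ∃ l ∈ Icc 0 C, Tendsto V F (𝓝 l) := by
    intro V C hV
    exact (isCompact_Icc (a := (0:ℝ)) (b := C)).ultrafilter_le_nhds' (F.map V) hV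
  have hUl : ∀ t : ℝ, ∃ l, 0 ≤ t → l ∈ Icc (0:ℝ) 1 ∧ Tendsto (fun n => U n t) F (𝓝 l) := by
    intro t
    by_cases ht : 0 ≤ t
    · obtain ⟨l, hl⟩ := hlim (fun n => U n t) 1 ((hev t).mono fun n hn => ⟨(hb n t ht hn).1, (hb n t ht hn).2.1⟩)
      exact ⟨l, fun _ => hl⟩
    · exact ⟨0, fun h => absurd h ht⟩
  have hWl : ∀ t : ℝ, ∃ l, 0 ≤ t → l ∈ Icc (0:ℝ) (1 + 3 * g 3) ∧ Tendsto (fun n => W n t) F (𝓝 l) := by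
    intro t
    by_cases ht : 0 ≤ t
    · obtain ⟨l, hl⟩ := hlim (fun n => W n t) (1 + 3 * g 3)
        ((hev t).mono fun n hn => ⟨(hb n t ht hn).2.2.1, (hb n t ht hn).2.2.2⟩)
      exact ⟨l, fun _ => hl⟩
    · exact ⟨0, fun h => absurd h ht⟩
  choose u hu using hUl
  choose w hw using hWl
  have hε0 : Tendsto ε F (𝓝 0) := by
    refine Tendsto.mono_left ?_ hF
    exact squeeze_zero (fun n => (hε n).le) (fun n => (hε' n).le) tendsto_one_div_add_atTop_nhds_zero_nat
  have hεp : ∀ β : ℝ, 0 < β → Tendsto (fun n => ε n ^ β) F (𝓝 0) := by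
    intro β hβ
    have := ((Real.continuous_rpow_const hβ.le).tendsto 0).comp hε0
    rwa [Real.zero_rpow hβ.ne'] at this
  have hp : ∀ (β : ℝ) (V : ℕ → ℝ) (l : ℝ), 0 < β → Tendsto V F (𝓝 l) →
      Tendsto (fun n => V n ^ β - ε n ^ β) F (𝓝 (l ^ β)) := by
    intro β V l hβ hV
    have := (((Real.continuous_rpow_const hβ.le).tendsto l).comp hV).sub (hεp β hβ)
    rwa [sub_zero] at this
  refine ⟨u, w, ?_, ?_, ?_⟩
  · refine tendsto_nhds_unique (hu 0 le_rfl).2 ?_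
    simp [hU0]
  · intro t ht
    exact ⟨(hu t ht).1.1, (hu t ht).1.2, (hw t ht).1.1, (hw t ht).1.2⟩
  · intro s t hs hst
    have ht := hs.trans hst
    have us := (hu s hs).2
    have ut := (hu t ht).2
    have ws := (hw s hs).2
    have wt := (hw t ht).2
    refine ⟨⟨?_, ?_⟩, ?_, ?_⟩
    · exact le_of_tendsto_of_tendsto ((hp α _ _ hα wt).mul_const (t - s)) (us.sub ut)
        ((hev t).mono fun n hn => (hi n s t hs hst hn).1.1)
    · exact le_of_tendsto_of_tendsto (us.sub ut) ((hp α _ _ hα ws).mul_const (t - s))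
        ((hev t).mono fun n hn => (hi n s t hs hst hn).1.2)
    · exact le_of_tendsto_of_tendsto (((hp q _ _ hq ut).const_mul (g s)).mul_const (t - s)) (ws.sub wt)
        ((hev t).mono fun n hn => (hi n s t hs hst hn).2.1)
    · exact le_of_tendsto_of_tendsto (ws.sub wt) (((hp q _ _ hq us).const_mul (g t)).mul_const (t - s))
        ((hev t).mono fun n hn => (hi n s t hs hst hn).2.2)

/-- squeeze for derivative -/
lemma deriv_squeeze {φ : ℝ → ℝ → ℝ} {F : ℝ → ℝ} {t l : ℝ} (ht : 0 < t)
    (hφ : ContinuousAt (fun x : ℝ × ℝ => φ x.1 x.2) (t, t)) (hl : φ t t = l)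
    (h : ∀ s r, 0 ≤ s → s ≤ r →
      φ s r * (r - s) ≤ F s - F r ∧ F s - F r ≤ φ r s * (r - s)) :
    HasDerivAt F (-l) t := by
  rw [hasDerivAt_iff_isLittleO, Asymptotics.isLittleO_iff]
  intro c hc
  have c1 : ContinuousAt (fun x : ℝ => φ t x) t :=
    ContinuousAt.comp_of_eq (f := fun x : ℝ => (t, x)) (y := (t,t)) hφ (by fun_prop) rfl
  have c2 : ContinuousAt (fun x : ℝ => φ x t) t :=
    ContinuousAt.comp_of_eq (f := fun x : ℝ => (x, t)) (y := (t,t)) hφ (by fun_prop) rfl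
  have e1 : ∀ᶠ x in 𝓝 t, |φ t x - l| < c := by
    have := Metric.continuousAt_iff'.1 c1 c hc
    simpa [Real.dist_eq, hl] using this
  have e2 : ∀ᶠ x in 𝓝 t, |φ x t - l| < c := by
    have := Metric.continuousAt_iff'.1 c2 c hc
    simpa [Real.dist_eq, hl] using this
  filter_upwards [e1, e2, lt_mem_nhds ht] with x h1 h2 hx
  rw [abs_lt] at h1 h2
  simp only [smul_eq_mul, Real.norm_eq_abs]
  rcases le_total t x with hxt | hxt
  · obtain ⟨a, b⟩ := h t x ht.le hxt
    rw [abs_of_nonneg (sub_nonneg.2 hxt), abs_le]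
    have := sub_nonneg.2 hxt
    constructor <;> nlinarith
  · obtain ⟨a, b⟩ := h x t hx.le hxt
    rw [abs_of_nonpos (sub_nonpos.2 hxt), abs_le]
    have := sub_nonneg.2 hxt
    constructor <;> nlinarith

lemma cont_of_lip {F : ℝ → ℝ} (h : ∀ T, 0 ≤ T → ∃ C, ∀ s t, 0 ≤ s → s ≤ t → t ≤ T →
    |F s - F t| ≤ C * (t - s)) : ContinuousOn F (Ici 0) := by
  intro t ht
  obtain ⟨C, hC⟩ := h (t + 1) (by have : (0:ℝ) ≤ t := ht; linarith)
  have hl : LipschitzOnWith (Real.toNNReal C) F (Icc 0 (t + 1)) := by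
    refine LipschitzOnWith.of_dist_le_mul fun x hx y hy => ?_
    rw [Real.dist_eq, Real.dist_eq]
    rcases le_total x y with hxy | hxy
    · have h1 := hC x y hx.1 hxy hy.2
      rw [abs_sub_comm x y, abs_of_nonneg (sub_nonneg.2 hxy)]
      exact h1.trans (mul_le_mul_of_nonneg_right (Real.le_coe_toNNReal C) (sub_nonneg.2 hxy))
    · have h1 := hC y x hy.1 hxy hx.2
      rw [abs_sub_comm (F x), abs_of_nonneg (sub_nonneg.2 hxy)]
      exact h1.trans (mul_le_mul_of_nonneg_right (Real.le_coe_toNNReal C) (sub_nonneg.2 hxy))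
  have h1 := hl.continuousOn t ⟨ht, by linarith⟩
  refine h1.mono_of_mem_nhdsWithin ?_
  have : Iio (t + 1) ∈ 𝓝 t := Iio_mem_nhds (by linarith)
  filter_upwards [self_mem_nhdsWithin, mem_nhdsWithin_of_mem_nhds this] with x hx hx'
  exact ⟨hx, (show x < t + 1 from hx').le⟩

lemma core_sol {α q K k : ℝ} (hα : 0 < α) (hq : 0 < q) (hK : 0 < K) (hk : 0 ≤ k) :
    ∃ (U W : ℝ → ℝ), U 0 = 1 ∧ (∀ t, 0 ≤ t → 0 ≤ U t) ∧ (∀ t, 0 ≤ t → 0 ≤ W t) ∧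
      AntitoneOn U (Ici 0) ∧ ContinuousOn U (Ici 0) ∧ ContinuousOn W (Ici 0) ∧
      (∀ t, 0 < t → HasDerivAt U (-(W t) ^ α) t) ∧
      (∀ t, 0 < t → HasDerivAt W (-(K * t ^ k * (U t) ^ q)) t) ∧
      Tendsto U atTop (𝓝 0) ∧ Tendsto W atTop (𝓝 0) ∧
      (∀ t, 0 < t → 0 < U t → 0 < W t) := by
  have gc : Continuous (fun t : ℝ => K * t ^ k) :=
    continuous_const.mul (Real.continuous_rpow_const hk)
  have g0 : ∀ t : ℝ, 0 ≤ t → 0 ≤ K * t ^ k := fun t ht => by positivity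
  have gm : MonotoneOn (fun t : ℝ => K * t ^ k) (Ici 0) := fun s hs t ht hst =>
    mul_le_mul_of_nonneg_left (Real.rpow_le_rpow hs hst hk) hK.le
  obtain ⟨U, W, hU0, hb, hi⟩ := limit_sol hα hq gc gm g0
  set M : ℝ := 1 + 3 * (K * 3 ^ k) with hM
  have aU : AntitoneOn U (Ici 0) := fun s hs t ht hst => by
    have h1 := (hi s t hs hst).1.1
    have := mul_nonneg (Real.rpow_nonneg (hb t ht).2.2.1 α) (sub_nonneg.2 hst)
    linarith
  have aW : AntitoneOn W (Ici 0) := fun s hs t ht hst => by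
    have h1 := (hi s t hs hst).2.1
    have := mul_nonneg (mul_nonneg (g0 s hs) (Real.rpow_nonneg (hb t ht).1 q)) (sub_nonneg.2 hst)
    linarith
  have cU : ContinuousOn U (Ici 0) := by
    apply cont_of_lip
    intro T hT
    refine ⟨M ^ α, fun s t hs hst ht => ?_⟩
    rw [abs_of_nonneg (sub_nonneg.2 (aU hs (hs.trans hst) hst))]
    exact (hi s t hs hst).1.2.trans (mul_le_mul_of_nonneg_right
      (Real.rpow_le_rpow (hb s hs).2.2.1 (hb s hs).2.2.2 hα.le) (sub_nonneg.2 hst))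
  have cW : ContinuousOn W (Ici 0) := by
    apply cont_of_lip
    intro T hT
    refine ⟨K * T ^ k * 1, fun s t hs hst ht => ?_⟩
    rw [abs_of_nonneg (sub_nonneg.2 (aW hs (hs.trans hst) hst))]
    refine (hi s t hs hst).2.2.trans (mul_le_mul_of_nonneg_right ?_ (sub_nonneg.2 hst))
    exact mul_le_mul (gm (hs.trans hst) hT ht) (Real.rpow_le_one (hb s hs).1 (hb s hs).2.1 hq.le)
      (Real.rpow_nonneg (hb s hs).1 q) (g0 T hT)
  have cU' : ∀ t, 0 < t → ContinuousAt U t := fun t ht => cU.continuousAt (Ici_mem_nhds ht)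
  have cW' : ∀ t, 0 < t → ContinuousAt W t := fun t ht => cW.continuousAt (Ici_mem_nhds ht)
  have dU : ∀ t, 0 < t → HasDerivAt U (-(W t) ^ α) t := by
    intro t ht
    refine deriv_squeeze (φ := fun s r => (W r) ^ α) ht ?_ rfl (fun s r hs hsr => (hi s r hs hsr).1)
    have : ContinuousAt (fun x => W x ^ α) t := (cW' t ht).rpow_const (Or.inr hα.le)
    exact ContinuousAt.comp_of_eq (g := fun x => W x ^ α) this continuousAt_snd rfl
  have dW : ∀ t, 0 < t → HasDerivAt W (-(K * t ^ k * (U t) ^ q)) t := by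
    intro t ht
    refine deriv_squeeze (φ := fun s r => K * s ^ k * (U r) ^ q) ht ?_ rfl
      (fun s r hs hsr => (hi s r hs hsr).2)
    have : ContinuousAt (fun x => U x ^ q) t := (cU' t ht).rpow_const (Or.inr hq.le)
    exact ContinuousAt.mul
      (ContinuousAt.comp_of_eq (g := fun x : ℝ => K * x ^ k) gc.continuousAt continuousAt_fst rfl)
      (ContinuousAt.comp_of_eq (g := fun x => U x ^ q) this continuousAt_snd rfl)
  have root : ∀ (V : ℝ → ℝ) (β C : ℝ), 0 < β → (∀ t, 0 ≤ t → 0 ≤ V t) →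
      (∀ t, 1 < t → V t ^ β * (t - 1) ≤ C) → Tendsto V atTop (𝓝 0) := by
    intro V β C hβ hV h
    have h1 : Tendsto (fun t : ℝ => C / (t - 1)) atTop (𝓝 0) :=
      tendsto_const_nhds.div_atTop (tendsto_atTop_add_const_right _ _ tendsto_id)
    have h2 : Tendsto (fun t => V t ^ β) atTop (𝓝 0) := by
      refine squeeze_zero' ?_ ?_ h1
      · filter_upwards [eventually_ge_atTop 0] with t ht
        exact Real.rpow_nonneg (hV t ht) β
      · filter_upwards [eventually_gt_atTop 1] with t ht
        rw [le_div_iff₀ (by linarith)]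
        exact h t ht
    have h3 := ((Real.continuous_rpow_const (q := β⁻¹) (by positivity)).tendsto 0).comp h2
    rw [Real.zero_rpow (by positivity)] at h3
    refine h3.congr' ?_
    filter_upwards [eventually_ge_atTop 0] with t ht
    simp only [Function.comp]
    rw [← Real.rpow_mul (hV t ht), mul_inv_cancel₀ hβ.ne', Real.rpow_one]
  refine ⟨U, W, hU0, fun t ht => (hb t ht).1, fun t ht => (hb t ht).2.2.1, aU, cU, cW, dU, dW, ?_, ?_, ?_⟩
  · refine root U q (M / K) hq (fun t ht => (hb t ht).1) fun t ht => ?_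
    have h1 := (hi 1 t zero_le_one ht.le).2.1
    rw [Real.one_rpow, mul_one] at h1
    have h2 := (hb 1 zero_le_one).2.2.2
    have h3 := (hb t (by linarith)).2.2.1
    rw [le_div_iff₀ hK]
    nlinarith
  · refine root W α 1 hα (fun t ht => (hb t ht).2.2.1) fun t ht => ?_
    have h1 := (hi 1 t zero_le_one ht.le).1.1
    have h2 := (hb 1 zero_le_one).2.1
    have h3 := (hb t (by linarith)).1
    linarith
  · intro t ht hUt
    by_contra hcon
    have hW0 : W t = 0 := le_antisymm (not_lt.1 hcon) (hb t ht.le).2.2.1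
    have hmin : IsLocalMin W t := by
      filter_upwards [lt_mem_nhds ht] with x hx
      rw [hW0]
      exact (hb x hx.le).2.2.1
    have := hmin.hasDerivAt_eq_zero (dW t ht)
    have : 0 < K * t ^ k * (U t) ^ q := by positivity
    linarith

open Filter Set Topology MeasureTheory

/-- Existence of a `C¹` nonincreasing nonnegative solution of the
Euler-Lagrange equation `Δ_p u = u^q` on `(0,∞)` with `u(0⁺)=1`, `u(∞)=0`,
satisfying the energy identities. -/
theorem stmt5 (d : ℕ) (hd : 1 ≤ d) (p q : ℝ) (hp : (d : ℝ) < p) (hq : 0 < q) :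
    ∃ u u' : ℝ → ℝ,
      (∀ r ∈ Ioi (0:ℝ), HasDerivAt u (u' r) r) ∧
      ContinuousOn u' (Ioi 0) ∧
      AntitoneOn u (Ioi 0) ∧
      (∀ r ∈ Ioi (0:ℝ), 0 ≤ u r) ∧
      Tendsto u (𝓝[>] 0) (𝓝 1) ∧
      Tendsto u atTop (𝓝 0) ∧
      (∀ r ∈ Ioi (0:ℝ),
        HasDerivAt (fun s => s ^ (d - 1) * |u' s| ^ (p - 2) * u' s)
          (r ^ (d - 1) * u r ^ q) r) ∧
      (∀ r ∈ Ioi (0:ℝ), 0 < u r → u' r < 0) ∧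
      IntegrableOn (fun r => r ^ (d - 1) * |u' r| ^ p) (Ioi 0) ∧
      IntegrableOn (fun r => r ^ (d - 1) * u r ^ (q + 1)) (Ioi 0) ∧
      IntegrableOn (fun r => r ^ (d - 1) * u r ^ q) (Ioi 0) ∧
      Tendsto (fun r => r ^ (d - 1) * |u' r| ^ (p - 1)) (𝓝[>] 0)
        (𝓝 ((∫ r in Ioi (0:ℝ), r ^ (d - 1) * |u' r| ^ p) +
             ∫ r in Ioi (0:ℝ), r ^ (d - 1) * u r ^ (q + 1))) ∧
      (∫ r in Ioi (0:ℝ), r ^ (d - 1) * |u' r| ^ p) +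
          (∫ r in Ioi (0:ℝ), r ^ (d - 1) * u r ^ (q + 1))
        = ∫ r in Ioi (0:ℝ), r ^ (d - 1) * u r ^ q := by
  have hd1 : (1:ℝ) ≤ d := by exact_mod_cast hd
  have hp1 : 0 < p - 1 := by linarith
  obtain ⟨γ, hγ⟩ : ∃ γ, γ = (p - d) / (p - 1) := ⟨_, rfl⟩
  have hγ0 : 0 < γ := by rw [hγ]; exact div_pos (by linarith) hp1
  have hγ1 : γ ≤ 1 := by rw [hγ, div_le_one hp1]; linarith
  have hγp : (γ - 1) * (p - 1) = 1 - d := by rw [hγ]; field_simp; ring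
  obtain ⟨α, hα⟩ : ∃ α, α = (p - 1)⁻¹ := ⟨_, rfl⟩
  have hα0 : 0 < α := by rw [hα]; positivity
  have hαp : α * (p - 1) = 1 := by rw [hα]; field_simp
  obtain ⟨U, W, hU0, Un, Wn, aU, cU, cW, dU, dW, tU, tW, pos⟩ :=
    core_sol (K := γ ^ (-p)) (k := (d - γ) / γ) hα0 hq (by positivity)
      (div_nonneg (by linarith) hγ0.le)
  obtain ⟨u, hu⟩ : ∃ u : ℝ → ℝ, u = fun r => U (r ^ γ) := ⟨_, rfl⟩
  obtain ⟨w, hw⟩ : ∃ w : ℝ → ℝ, w = fun r => γ ^ (p - 1) * W (r ^ γ) := ⟨_, rfl⟩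
  obtain ⟨u', hu'⟩ : ∃ u' : ℝ → ℝ, u' = fun r => -(γ * r ^ (γ - 1) * W (r ^ γ) ^ α) := ⟨_, rfl⟩
  have rp : ∀ r : ℝ, 0 < r → 0 < r ^ γ := fun r hr => Real.rpow_pos_of_pos hr γ
  have dpow : ∀ r : ℝ, 0 < r → HasDerivAt (fun r : ℝ => r ^ γ) (γ * r ^ (γ - 1)) r := fun r hr =>
    Real.hasDerivAt_rpow_const (Or.inl hr.ne')
  have hdu : ∀ r ∈ Ioi (0:ℝ), HasDerivAt u (u' r) r := by
    intro r hr
    rw [hu, hu']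
    have := (dU _ (rp r hr)).comp r (dpow r hr)
    refine this.congr_deriv ?_
    ring
  have un : ∀ r, 0 ≤ r → 0 ≤ u r := fun r hr => by rw [hu]; exact Un _ (by positivity)
  have wn : ∀ r, 0 ≤ r → 0 ≤ w r := fun r hr => by
    rw [hw]; exact mul_nonneg (by positivity) (Wn _ (by positivity))
  have hdw : ∀ r ∈ Ioi (0:ℝ), HasDerivAt w (-(r ^ (d - 1) * u r ^ q)) r := by
    intro r hr
    have hr : 0 < r := hr
    rw [hu, hw]
    have := ((dW _ (rp r hr)).comp r (dpow r hr)).const_mul (γ ^ (p - 1))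
    refine this.congr_deriv ?_
    have e1 : γ ^ (p - 1) * γ ^ (-p) * γ = 1 := by
      rw [← Real.rpow_add hγ0]
      have : p - 1 + -p = -1 := by ring
      rw [this, Real.rpow_neg_one, inv_mul_cancel₀ hγ0.ne']
    have e2 : (r ^ γ) ^ (((d:ℝ) - γ) / γ) * r ^ (γ - 1) = r ^ (d - 1) := by
      rw [← Real.rpow_mul hr.le, ← Real.rpow_add hr, ← Real.rpow_natCast, Nat.cast_sub hd]
      congr 1
      field_simp
      simp
    rw [← e2]
    linear_combination (-((r ^ γ) ^ (((d:ℝ) - γ) / γ) * r ^ (γ - 1) * U (r ^ γ) ^ q)) * e1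
  have u'np : ∀ r, 0 < r → u' r ≤ 0 := by
    intro r hr
    rw [hu']
    have := Real.rpow_nonneg (Wn _ (rp r hr).le) α
    have : 0 ≤ γ * r ^ (γ - 1) * W (r ^ γ) ^ α := by positivity
    simpa using this
  have hflux : ∀ r, 0 < r → r ^ (d - 1) * |u' r| ^ (p - 1) = w r := by
    intro r hr
    rw [abs_of_nonpos (u'np r hr), hu', hw]
    simp only [neg_neg]
    have hW := Wn _ (rp r hr).le
    rw [Real.mul_rpow (by positivity) (Real.rpow_nonneg hW α), Real.mul_rpow hγ0.le (by positivity),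
      ← Real.rpow_mul hW, hαp, Real.rpow_one, ← Real.rpow_mul hr.le, hγp]
    have e2 : r ^ (d - 1) * r ^ (1 - (d:ℝ)) = 1 := by
      rw [← Real.rpow_natCast, Nat.cast_sub hd, ← Real.rpow_add hr]
      simp
    linear_combination (γ ^ (p - 1) * W (r ^ γ)) * e2
  have hflux2 : ∀ r, 0 < r → r ^ (d - 1) * |u' r| ^ (p - 2) * u' r = - w r := by
    intro r hr
    rw [← hflux r hr]
    have : |u' r| ^ (p - 1) = |u' r| ^ (p - 2) * |u' r| := by
      rw [← Real.rpow_add_one' (abs_nonneg _) (by linarith)]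
      congr 1; ring
    rw [this, abs_of_nonpos (u'np r hr)]
    ring
  have hflux3 : ∀ r, 0 < r → r ^ (d - 1) * |u' r| ^ p = - (u' r * w r) := by
    intro r hr
    rw [← hflux r hr]
    have : |u' r| ^ p = |u' r| ^ (p - 1) * |u' r| := by
      rw [← Real.rpow_add_one' (abs_nonneg _) (by linarith)]
      congr 1; ring
    rw [this, abs_of_nonpos (u'np r hr)]
    ring
  have cpow : Continuous (fun r : ℝ => r ^ γ) := Real.continuous_rpow_const hγ0.le
  have mpow : MapsTo (fun r : ℝ => r ^ γ) (Ici 0) (Ici 0) := fun r hr =>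
    Real.rpow_nonneg hr γ
  have ccu : ContinuousOn u (Ici 0) := by rw [hu]; exact cU.comp cpow.continuousOn mpow
  have ccw : ContinuousOn w (Ici 0) := by
    rw [hw]; exact continuousOn_const.mul (cW.comp cpow.continuousOn mpow)
  have ccu' : ContinuousOn u' (Ioi 0) := by
    rw [hu']
    refine ((continuousOn_const.mul ?_).mul ?_).neg
    · exact fun r hr => (Real.continuousAt_rpow_const _ _ (Or.inl (ne_of_gt hr))).continuousWithinAt
    · exact ((cW.comp cpow.continuousOn mpow).mono Ioi_subset_Ici_self).rpow_const
        (fun _ _ => Or.inr hα0.le)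
  have u0 : u 0 = 1 := by rw [hu]; simp [Real.zero_rpow hγ0.ne', hU0]
  have tu : Tendsto u atTop (𝓝 0) := by rw [hu]; exact tU.comp (tendsto_rpow_atTop hγ0)
  have tw : Tendsto w atTop (𝓝 0) := by
    rw [hw]; simpa using (tW.comp (tendsto_rpow_atTop hγ0)).const_mul (γ ^ (p - 1))
  have hc0u := ccu 0 self_mem_Ici
  have hc0w := ccw 0 self_mem_Ici
  have s1 : ∀ r ∈ Ioi (0:ℝ), -(r ^ (d - 1) * u r ^ q) ≤ 0 := fun r hr => by
    have := un r (le_of_lt hr)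
    have hr : 0 < r := hr
    have : 0 ≤ r ^ (d - 1) * u r ^ q := by positivity
    linarith
  have i1 : IntegrableOn (fun r => r ^ (d - 1) * u r ^ q) (Ioi 0) := by
    simpa using (integrableOn_Ioi_deriv_of_nonpos hc0w hdw s1 tw).neg
  have v1 : ∫ r in Ioi (0:ℝ), r ^ (d - 1) * u r ^ q = w 0 := by
    have := integral_Ioi_of_hasDerivAt_of_nonpos hc0w hdw s1 tw
    rw [integral_neg] at this
    linarith
  have n2 : ∀ r ∈ Ioi (0:ℝ), 0 ≤ r ^ (d - 1) * |u' r| ^ p := fun r hr => by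
    have hr : 0 < r := hr
    positivity
  have n3 : ∀ r ∈ Ioi (0:ℝ), 0 ≤ r ^ (d - 1) * u r ^ (q + 1) := fun r hr => by
    have := un r (le_of_lt hr)
    have hr : 0 < r := hr
    positivity
  have hdE : ∀ r ∈ Ioi (0:ℝ), HasDerivAt (fun r => u r * w r)
      (-(r ^ (d - 1) * |u' r| ^ p + r ^ (d - 1) * u r ^ (q + 1))) r := by
    intro r hr
    refine ((hdu r hr).mul (hdw r hr)).congr_deriv ?_
    rw [hflux3 r hr, Real.rpow_add_one' (un r (le_of_lt hr)) (by linarith)]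
    ring
  have s2 : ∀ r ∈ Ioi (0:ℝ), -(r ^ (d - 1) * |u' r| ^ p + r ^ (d - 1) * u r ^ (q + 1)) ≤ 0 :=
    fun r hr => by linarith [n2 r hr, n3 r hr]
  have tE : Tendsto (fun r => u r * w r) atTop (𝓝 0) := by simpa using tu.mul tw
  have i2 : IntegrableOn (fun r => r ^ (d - 1) * |u' r| ^ p + r ^ (d - 1) * u r ^ (q + 1)) (Ioi 0) := by
    have := (integrableOn_Ioi_deriv_of_nonpos (hc0u.mul hc0w) hdE s2 tE).neg
    refine this.congr_fun (fun r _ => ?_) measurableSet_Ioi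
    simp only [Pi.neg_apply, neg_neg]
  have v2 : ∫ r in Ioi (0:ℝ), (r ^ (d - 1) * |u' r| ^ p + r ^ (d - 1) * u r ^ (q + 1)) = w 0 := by
    have := integral_Ioi_of_hasDerivAt_of_nonpos (hc0u.mul hc0w) hdE s2 tE
    rw [integral_neg, Pi.mul_apply, u0] at this
    linarith
  have m2 : ContinuousOn (fun r => r ^ (d - 1) * |u' r| ^ p) (Ioi 0) :=
    (by fun_prop : ContinuousOn (fun r : ℝ => r ^ (d - 1)) (Ioi 0)).mul
      (ccu'.abs.rpow_const fun _ _ => Or.inr (by linarith))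
  have m3 : ContinuousOn (fun r => r ^ (d - 1) * u r ^ (q + 1)) (Ioi 0) :=
    (by fun_prop : ContinuousOn (fun r : ℝ => r ^ (d - 1)) (Ioi 0)).mul
      ((ccu.mono Ioi_subset_Ici_self).rpow_const fun _ _ => Or.inr (by linarith))
  have j2 : IntegrableOn (fun r => r ^ (d - 1) * |u' r| ^ p) (Ioi 0) := by
    refine Integrable.mono' i2 (m2.aestronglyMeasurable measurableSet_Ioi) ?_
    filter_upwards [ae_restrict_mem measurableSet_Ioi] with r hr
    rw [Real.norm_of_nonneg (n2 r hr)]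
    linarith [n3 r hr]
  have j3 : IntegrableOn (fun r => r ^ (d - 1) * u r ^ (q + 1)) (Ioi 0) := by
    refine Integrable.mono' i2 (m3.aestronglyMeasurable measurableSet_Ioi) ?_
    filter_upwards [ae_restrict_mem measurableSet_Ioi] with r hr
    rw [Real.norm_of_nonneg (n3 r hr)]
    linarith [n2 r hr]
  have v3 := integral_add j2 j3
  rw [v2] at v3
  refine ⟨u, u', hdu, ccu', ?_, fun r hr => un r (le_of_lt hr), ?_, tu, ?_, ?_, j2, j3, i1, ?_, ?_⟩
  · intro s hs t ht hst
    rw [hu]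
    exact aU (mpow (Ioi_subset_Ici_self hs)) (mpow (Ioi_subset_Ici_self ht)) (Real.rpow_le_rpow (le_of_lt hs) hst hγ0.le)
  · have : Tendsto u (𝓝[>] 0) (𝓝 (u 0)) := hc0u.mono Ioi_subset_Ici_self
    rwa [u0] at this
  · intro r hr
    have := (hdw r hr).neg
    rw [neg_neg] at this
    refine this.congr_of_eventuallyEq ?_
    filter_upwards [lt_mem_nhds (show (0:ℝ) < r from hr)] with x hx
    exact hflux2 x hx
  · intro r hr hur
    have hr : 0 < r := hr
    rw [hu] at hur
    have := pos _ (rp r hr) hur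
    rw [hu']
    have : 0 < γ * r ^ (γ - 1) * W (r ^ γ) ^ α := by positivity
    simpa using this
  · rw [← v3]
    have : Tendsto w (𝓝[>] 0) (𝓝 (w 0)) := hc0w.mono Ioi_subset_Ici_self
    refine this.congr' ?_
    filter_upwards [self_mem_nhdsWithin] with r hr
    exact (hflux r hr).symm
  · rw [← v3, v1]
end

section
/- Let p > 1 and q ≥ 0 be real numbers, and set θ = p/(p + (p−1)(q+1)) and C = ((p + (p−1)(q+1))/(2p))^{p/(p + (p−1)(q+1))}. Then for every continuously differentiable function u : ℝ → ℝ with ∫_ℝ |u(x)|^{q+1} dx < ∞ and ∫_ℝ |u'(x)|^p dx < ∞, one has sup_{x∈ℝ} |u(x)| ≤ C · (∫_ℝ |u(x)|^{q+1} dx)^{(1−θ)/(q+1)} · (∫_ℝ |u'(x)|^p dx)^{θ/p}. Moreover, the constant C is optimal: for every C' < C there exists such a function u for which the inequality fails with C' in place of C. -/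
open Filter Set Topology MeasureTheory

theorem gn_upper (p m r s : ℝ) (hp : 1 < p) (hm : 1 ≤ m) (hr : p.HolderConjugate r)
    (hs : s = 1 + m / r) (u : ℝ → ℝ) (hu : ContDiff ℝ 1 u)
    (hA : Integrable (fun x => |u x| ^ m)) (hB : Integrable (fun x => |deriv u x| ^ p)) (x : ℝ) :
    |u x| ^ s ≤ s / 2 * ((∫ y : ℝ, |u y| ^ m) ^ (1 / r) * (∫ y : ℝ, |deriv u y| ^ p) ^ (1 / p)) := by
  have hr0 : 0 < r := hr.symm.pos
  have hp0 : 0 < p := by linarith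
  have hs1 : 1 < s := by rw [hs]; have : 0 < m / r := by positivity
                         linarith
  have hcu : Continuous u := hu.continuous
  have hcd : Continuous (deriv u) := hu.continuous_deriv le_rfl
  have hpow : ∀ y : ℝ, (|u y| ^ (s - 1)) ^ r = |u y| ^ m := by
    intro y
    rw [← Real.rpow_mul (abs_nonneg _)]
    congr 1
    rw [hs]; field_simp; ring
  have hcf : Continuous (fun y => |u y| ^ (s - 1)) :=
    (hcu.abs).rpow_const (fun _ => Or.inr (by linarith))
  have hf : MemLp (fun y => |u y| ^ (s - 1)) (ENNReal.ofReal r) := by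
    rw [← integrable_norm_rpow_iff hcf.aestronglyMeasurable (by simpa using hr0) (by simp)]
    refine hA.congr (Eventually.of_forall fun y => ?_)
    simp only [ENNReal.toReal_ofReal hr0.le, Real.norm_eq_abs]
    rw [abs_of_nonneg (Real.rpow_nonneg (abs_nonneg _) _), hpow]
  have hg : MemLp (fun y => |deriv u y|) (ENNReal.ofReal p) := by
    rw [← integrable_norm_rpow_iff hcd.abs.aestronglyMeasurable (by simpa using hp0) (by simp)]
    refine hB.congr (Eventually.of_forall fun y => ?_)
    simp only [ENNReal.toReal_ofReal hp0.le, Real.norm_eq_abs, abs_abs]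
  have hH := integral_mul_le_Lp_mul_Lq_of_nonneg hr.symm
    (Eventually.of_forall fun y => Real.rpow_nonneg (abs_nonneg (u y)) (s - 1))
    (Eventually.of_forall fun y => abs_nonneg (deriv u y)) hf hg
  simp only [hpow] at hH
  have hfg : Integrable (fun y => |u y| ^ (s - 1) * |deriv u y|) := by
    have : ENNReal.HolderConjugate (ENNReal.ofReal r) (ENNReal.ofReal p) := hr.symm.ennrealOfReal
    exact hf.integrable_mul hg
  set G' : ℝ → ℝ := fun y => s * |u y| ^ (s - 2) * u y * deriv u y with hG'
  have hder : ∀ y, HasDerivAt (fun y => |u y| ^ s) (G' y) y := fun y =>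
    (hasDerivAt_abs_rpow (u y) hs1).comp y
      ((hu.differentiable one_ne_zero) y).hasDerivAt
  have habs : ∀ y, |G' y| = s * (|u y| ^ (s - 1) * |deriv u y|) := by
    intro y
    simp only [hG', abs_mul, abs_of_pos (by linarith : 0 < s),
      abs_of_nonneg (Real.rpow_nonneg (abs_nonneg (u y)) (s - 2))]
    by_cases h : u y = 0
    · simp [h, Real.zero_rpow (by linarith : s - 1 ≠ 0)]
    · have : |u y| ^ (s - 1) = |u y| ^ (s - 2) * |u y| := by
        rw [← Real.rpow_add_one (by simpa using h)]; congr 1; ring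
      rw [this]; ring
  have hG'm : AEStronglyMeasurable G' volume := by
    have : G' = deriv (fun y => |u y| ^ s) := by ext y; exact (hder y).deriv.symm
    rw [this]; exact (measurable_deriv _).aestronglyMeasurable
  have hG'i : Integrable G' := by
    refine (hfg.const_mul s).mono' hG'm (Eventually.of_forall fun y => ?_)
    rw [Real.norm_eq_abs, habs]
  have hz : ∀ l : ℝ, ∀ F : Filter ℝ, F.NeBot → F.IsMeasurablyGenerated → (∀ S ∈ F, volume S = ⊤) →
      Tendsto (fun y => |u y| ^ s) F (𝓝 l) → l = 0 := by
    intro l F _ _ hF hl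
    have h1 : Tendsto (fun y => |u y| ^ m) F (𝓝 (l ^ (m / s))) := by
      have := hl.rpow_const (p := m / s) (Or.inr (by positivity))
      refine this.congr fun y => ?_
      rw [← Real.rpow_mul (abs_nonneg _)]
      congr 1; field_simp
    have h2 := IntegrableAtFilter.eq_zero_of_tendsto (hA.integrableAtFilter F) hF h1
    have hl0 : 0 ≤ l := ge_of_tendsto' hl fun y => Real.rpow_nonneg (abs_nonneg _) _
    exact ((Real.rpow_eq_zero hl0 (by positivity)).1 h2)
  have ht := tendsto_limUnder_of_hasDerivAt_of_integrableOn_Ioi (a := x)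
    (fun y _ => hder y) hG'i.integrableOn
  have hb := tendsto_limUnder_of_hasDerivAt_of_integrableOn_Iic (a := x)
    (fun y _ => hder y) hG'i.integrableOn
  have ht0 := hz _ atTop inferInstance inferInstance (by
    intro S hS
    rcases mem_atTop_sets.1 hS with ⟨b, hb⟩
    rw [← top_le_iff, ← Real.volume_Ici (a := b)]
    exact measure_mono hb) ht
  have hb0 := hz _ atBot inferInstance inferInstance (by
    intro S hS
    rcases mem_atBot_sets.1 hS with ⟨b, hb⟩
    rw [← top_le_iff, ← Real.volume_Iic (a := b)]
    exact measure_mono hb) hb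
  rw [ht0] at ht
  rw [hb0] at hb
  have e1 := integral_Ioi_of_hasDerivAt_of_tendsto' (a := x) (fun y _ => hder y) hG'i.integrableOn ht
  have e2 := integral_Iic_of_hasDerivAt_of_tendsto' (a := x) (fun y _ => hder y) hG'i.integrableOn hb
  have b1 : |∫ y in Ioi x, G' y| ≤ ∫ y in Ioi x, |G' y| := abs_integral_le_integral_abs
  have b2 : |∫ y in Iic x, G' y| ≤ ∫ y in Iic x, |G' y| := abs_integral_le_integral_abs
  have e3 : (∫ y in Iic x, |G' y|) + ∫ y in Ioi x, |G' y| = ∫ y, |G' y| :=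
    intervalIntegral.integral_Iic_add_Ioi hG'i.abs.integrableOn hG'i.abs.integrableOn
  have e4 : ∫ y, |G' y| = s * ∫ y, |u y| ^ (s - 1) * |deriv u y| := by
    simp only [habs]; exact integral_const_mul _ _
  rw [e1] at b1
  rw [e2] at b2
  have c1 := (abs_le.1 b1).1
  have c2 := (abs_le.1 b2).2
  have := mul_le_mul_of_nonneg_left hH (by linarith : 0 ≤ s)
  linarith

theorem gn_hasDerivAt_max_rpow (β : ℝ) (hβ : 1 < β) (y : ℝ) :
    HasDerivAt (fun y : ℝ => (max y 0) ^ β) (β * (max y 0) ^ (β - 1)) y := by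
  have key : ∀ y : ℝ, y ≠ 0 → HasDerivAt (fun y : ℝ => (max y 0) ^ β) (β * (max y 0) ^ (β - 1)) y := by
    intro y hy
    rcases lt_or_gt_of_ne hy with h | h
    · rw [max_eq_right h.le, Real.zero_rpow (by linarith), mul_zero]
      refine (hasDerivAt_const y (0:ℝ)).congr_of_eventuallyEq ?_
      filter_upwards [Iio_mem_nhds h] with z hz
      rw [max_eq_right (le_of_lt hz), Real.zero_rpow (by linarith)]
    · rw [max_eq_left h.le]
      refine (Real.hasDerivAt_rpow_const (Or.inl hy)).congr_of_eventuallyEq ?_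
      filter_upwards [Ioi_mem_nhds h] with z hz
      rw [max_eq_left (le_of_lt hz)]
  by_cases hy : y = 0
  · subst hy
    refine hasDerivAt_of_hasDerivAt_of_ne (g := fun y : ℝ => β * (max y 0) ^ (β - 1)) key ?_ ?_
    · exact ((continuous_id.max continuous_const).rpow_const
        (fun _ => Or.inr (by linarith))).continuousAt
    · exact (continuous_const.mul ((continuous_id.max continuous_const).rpow_const
        (fun _ => Or.inr (by linarith)))).continuousAt
  · exact key y hy

theorem gn_exists_phi (α : ℝ) (hα : 0 < α) : ∃ φ : ℝ → ℝ, φ 0 = 1 ∧ (∀ t, 0 ≤ t → 0 ≤ φ t) ∧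
    (∀ t, 0 ≤ t → HasDerivAt φ (-(φ t) ^ α) t) ∧ Tendsto φ atTop (𝓝 0) := by
  rcases lt_trichotomy α 1 with h | h | h
  · have h1 : 0 < 1 - α := by linarith
    have hβ : 1 < 1 / (1 - α) := by rw [lt_div_iff₀ h1]; linarith
    refine ⟨fun t => (max (1 - (1 - α) * t) 0) ^ (1 / (1 - α)), by simp, ?_, ?_, ?_⟩
    · intro t _; positivity
    · intro t _
      have hd : HasDerivAt (fun t : ℝ => 1 - (1 - α) * t) (-(1 - α)) t := by
        simpa using ((hasDerivAt_id t).const_mul (1 - α)).const_sub 1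
      have := (gn_hasDerivAt_max_rpow _ hβ (1 - (1 - α) * t)).comp t hd
      refine this.congr_deriv ?_
      symm
      dsimp only
      rw [← Real.rpow_mul (le_max_right _ _)]
      have e : 1 / (1 - α) * α = 1 / (1 - α) - 1 := by field_simp; ring
      rw [e]; field_simp
    · refine tendsto_const_nhds.congr' ?_
      filter_upwards [eventually_ge_atTop (1 / (1 - α))] with t ht
      rw [div_le_iff₀ h1] at ht
      rw [max_eq_right (by linarith), Real.zero_rpow (by positivity)]
  · subst h
    refine ⟨fun t => Real.exp (-t), by simp, fun t _ => (Real.exp_pos _).le, ?_, ?_⟩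
    · intro t _
      simpa using (hasDerivAt_id t).neg.exp
    · exact Real.tendsto_exp_neg_atTop_nhds_zero
  · have h1 : 0 < α - 1 := by linarith
    refine ⟨fun t => (1 + (α - 1) * t) ^ (-(1 / (α - 1))), by simp, ?_, ?_, ?_⟩
    · intro t _; positivity
    · intro t ht
      have hpos : 0 < 1 + (α - 1) * t := by positivity
      have hd : HasDerivAt (fun t : ℝ => 1 + (α - 1) * t) (α - 1) t := by
        simpa using ((hasDerivAt_id t).const_mul (α - 1)).const_add 1
      have := hd.rpow_const (p := -(1 / (α - 1))) (Or.inl hpos.ne')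
      convert this using 1
      rw [← Real.rpow_mul hpos.le]
      have e : -(1 / (α - 1)) * α = -(1 / (α - 1)) - 1 := by field_simp; ring
      rw [e]; field_simp
    · refine (tendsto_rpow_neg_atTop (by positivity : 0 < 1 / (α - 1))).comp ?_
      exact tendsto_atTop_add_const_left _ _ (tendsto_id.const_mul_atTop h1)

theorem gn_phi_integral (α m s : ℝ) (hs : s = 1 + m - α) (hs1 : 1 < s)
    (hα : 0 < α) (φ : ℝ → ℝ) (h0 : φ 0 = 1)
    (hn : ∀ t, 0 ≤ t → 0 ≤ φ t) (hd : ∀ t, 0 ≤ t → HasDerivAt φ (-(φ t) ^ α) t)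
    (ht : Tendsto φ atTop (𝓝 0)) (ε : ℝ) :
    IntegrableOn (fun x => φ (x - ε) ^ m) (Ioi ε) ∧ ∫ x in Ioi ε, φ (x - ε) ^ m = 1 / s := by
  have hm0 : m ≠ 0 := by intro h; linarith
  have hder : ∀ x ∈ Ici ε, HasDerivAt (fun x => -(φ (x - ε) ^ s / s)) (φ (x - ε) ^ m) x := by
    intro x hx
    have hx0 : 0 ≤ x - ε := sub_nonneg.2 hx
    have h1 : HasDerivAt (fun x => φ (x - ε)) (-(φ (x - ε)) ^ α) x := by
      simpa using (hd (x - ε) hx0).comp_sub_const x ε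
    have h2 := ((h1.rpow_const (p := s) (Or.inr hs1.le)).div_const s).neg
    refine h2.congr_deriv ?_
    have : φ (x - ε) ^ m = φ (x - ε) ^ α * φ (x - ε) ^ (s - 1) := by
      rw [← Real.rpow_add' (hn _ hx0) (by rw [hs]; ring_nf; exact hm0)]
      congr 1; rw [hs]; ring
    rw [this]
    have : s ≠ 0 := by linarith
    field_simp
  have hnn : ∀ x ∈ Ioi ε, 0 ≤ φ (x - ε) ^ m := fun x hx =>
    Real.rpow_nonneg (hn _ (sub_nonneg.2 (le_of_lt hx))) _
  have htt : Tendsto (fun x => -(φ (x - ε) ^ s / s)) atTop (𝓝 0) := by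
    have h1 : Tendsto (fun x => φ (x - ε)) atTop (𝓝 0) :=
      ht.comp (tendsto_atTop_add_const_right _ (-ε) tendsto_id)
    have h2 := ((h1.rpow_const (p := s) (Or.inr (by linarith))).div_const s).neg
    simpa [Real.zero_rpow (by linarith : s ≠ 0)] using h2
  refine ⟨integrableOn_Ioi_deriv_of_nonneg' hder hnn htt, ?_⟩
  rw [integral_Ioi_of_hasDerivAt_of_nonneg' hder hnn htt]
  simp [h0]

theorem gn_integrable_even (k : ℝ → ℝ) (he : ∀ x, k (-x) = k x) (h : IntegrableOn k (Ioi 0)) :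
    Integrable k := by
  have h2 : IntegrableOn k (Iic 0) := by
    rw [← Measure.map_neg_eq_self (volume : Measure ℝ)]
    let m : MeasurableEmbedding fun x : ℝ => -x := (Homeomorph.neg ℝ).measurableEmbedding
    rw [m.integrableOn_map_iff]
    simp_rw [Function.comp_def, he, neg_preimage, neg_Iic, neg_zero]
    exact Iff.mpr integrableOn_Ici_iff_integrableOn_Ioi h
  rw [← integrableOn_univ, ← Iic_union_Ioi (a := (0:ℝ))]
  exact h2.union h

theorem gn_lower (p m s : ℝ) (hp : 1 < p) (hm : 1 ≤ m) (hs : s = 1 + m - m / p)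
    (ε : ℝ) (hε : 0 < ε) :
    ∃ u : ℝ → ℝ, ContDiff ℝ 1 u ∧ Integrable (fun x => |u x| ^ m) ∧
      Integrable (fun x => |deriv u x| ^ p) ∧ u 0 = 1 ∧
      ∫ x, |u x| ^ m ≤ 2 / s + 2 * ε ∧ ∫ x, |deriv u x| ^ p ≤ ∫ x, |u x| ^ m := by
  have hp0 : 0 < p := by linarith
  have hα : 0 < m / p := by positivity
  have hs1 : 1 < s := by
    have : m / p < m := div_lt_self (by linarith) hp
    linarith
  obtain ⟨φ, h0, hn, hd, ht⟩ := gn_exists_phi (m / p) hα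
  obtain ⟨hI, hI2⟩ := gn_phi_integral (m / p) m s hs hs1 hα φ h0 hn hd ht ε
  have hanti : AntitoneOn φ (Ici 0) := by
    refine antitoneOn_of_deriv_nonpos (convex_Ici 0)
      (fun t h => (hd t h).continuousAt.continuousWithinAt) ?_ ?_
    · intro t h; rw [interior_Ici] at h
      exact (hd t (le_of_lt h)).differentiableAt.differentiableWithinAt
    · intro t h; rw [interior_Ici] at h
      rw [(hd t (le_of_lt h)).deriv]
      have := Real.rpow_nonneg (hn t (le_of_lt h)) (m / p)
      linarith
  set h : ℝ → ℝ := fun x => √(x ^ 2 + ε ^ 2) - ε with hh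
  have hpos : ∀ x : ℝ, 0 < x ^ 2 + ε ^ 2 := fun x => by positivity
  have hge : ∀ x, 0 ≤ h x := fun x => by
    simp only [hh, sub_nonneg]; exact Real.le_sqrt_of_sq_le (by nlinarith [sq_nonneg x])
  have hge2 : ∀ x, x - ε ≤ h x := fun x => by
    simp only [hh]
    have : x ≤ √(x ^ 2 + ε ^ 2) := Real.le_sqrt_of_sq_le (by nlinarith [sq_nonneg ε])
    linarith
  have hh0 : h 0 = 0 := by simp [hh, Real.sqrt_sq hε.le]
  have hhe : ∀ x, h (-x) = h x := fun x => by simp [hh]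
  have hhd : ∀ x, HasDerivAt h (x / √(x ^ 2 + ε ^ 2)) x := fun x => by
    have h1 : HasDerivAt (fun x : ℝ => x ^ 2 + ε ^ 2) (2 * x) x := by
      simpa using (hasDerivAt_pow 2 x).add_const (ε ^ 2)
    refine ((h1.sqrt (hpos x).ne').sub_const ε).congr_deriv ?_
    rw [mul_div_mul_left _ _ two_ne_zero]
  have hhc : Continuous h := by fun_prop
  have hh1 : ∀ x, |x / √(x ^ 2 + ε ^ 2)| ≤ 1 := fun x => by
    rw [abs_div, abs_of_nonneg (Real.sqrt_nonneg _)]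
    refine div_le_one_of_le₀ (Real.abs_le_sqrt (by nlinarith [sq_nonneg ε])) (Real.sqrt_nonneg _)
  set u : ℝ → ℝ := fun x => φ (h x) with hu
  have hun : ∀ x, 0 ≤ u x := fun x => hn _ (hge x)
  have hud : ∀ x, HasDerivAt u (-(u x) ^ (m / p) * (x / √(x ^ 2 + ε ^ 2))) x := fun x =>
    (hd _ (hge x)).comp x (hhd x)
  have huc : Continuous u := continuous_iff_continuousAt.2 fun x => (hud x).continuousAt
  have hde : deriv u = fun x => -(u x) ^ (m / p) * (x / √(x ^ 2 + ε ^ 2)) :=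
    funext fun x => (hud x).deriv
  have hdc : Continuous (deriv u) := by
    rw [hde]
    refine ((huc.rpow_const fun _ => Or.inr hα.le).neg).mul ?_
    exact continuous_id.div (by fun_prop) (fun x => (Real.sqrt_pos.2 (hpos x)).ne')
  have hkc : Continuous (fun x => |u x| ^ m) := huc.abs.rpow_const fun _ => Or.inr (by linarith)
  have hk1 : ∀ x ∈ Ioi ε, |u x| ^ m ≤ φ (x - ε) ^ m := fun x hx => by
    have hx' : 0 ≤ x - ε := sub_nonneg.2 (le_of_lt hx)
    rw [abs_of_nonneg (hun x)]
    exact Real.rpow_le_rpow (hun x) (hanti hx' (hge x) (hge2 x)) (by linarith)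
  have hk2 : ∀ x, |u x| ^ m ≤ 1 := fun x => by
    rw [abs_of_nonneg (hun x)]
    refine Real.rpow_le_one (hun x) ?_ (by linarith)
    rw [← h0]
    exact hanti self_mem_Ici (hge x) (hge x)
  have hi1 : IntegrableOn (fun x => |u x| ^ m) (Ioi ε) := by
    refine hI.mono' hkc.aestronglyMeasurable.restrict ?_
    refine (ae_restrict_iff' measurableSet_Ioi).2 (Eventually.of_forall fun x hx => ?_)
    rw [Real.norm_eq_abs, abs_of_nonneg (Real.rpow_nonneg (abs_nonneg _) _)]
    exact hk1 x hx
  have hi2 : IntegrableOn (fun x => |u x| ^ m) (Ioc 0 ε) :=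
    (hkc.integrableOn_Icc).mono_set Ioc_subset_Icc_self
  have hi3 : IntegrableOn (fun x => |u x| ^ m) (Ioi 0) := by
    rw [← Ioc_union_Ioi_eq_Ioi hε.le]; exact hi2.union hi1
  have hi : Integrable (fun x => |u x| ^ m) :=
    gn_integrable_even _ (fun x => by simp only [hu, hhe]) hi3
  have hdp : ∀ x, |deriv u x| ^ p ≤ |u x| ^ m := fun x => by
    have : |deriv u x| ≤ |u x| ^ (m / p) := by
      rw [hde]; simp only [abs_mul, abs_neg]
      rw [abs_of_nonneg (Real.rpow_nonneg (hun x) _), abs_of_nonneg (hun x)]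
      exact mul_le_of_le_one_right (Real.rpow_nonneg (hun x) _) (hh1 x)
    calc |deriv u x| ^ p ≤ (|u x| ^ (m / p)) ^ p := Real.rpow_le_rpow (abs_nonneg _) this hp0.le
      _ = |u x| ^ m := by
        rw [← Real.rpow_mul (abs_nonneg _)]; congr 1; field_simp
  have hid : Integrable (fun x => |deriv u x| ^ p) := by
    refine hi.mono' (hdc.abs.rpow_const fun _ => Or.inr hp0.le).aestronglyMeasurable
      (Eventually.of_forall fun x => ?_)
    rw [Real.norm_eq_abs, abs_of_nonneg (Real.rpow_nonneg (abs_nonneg _) _)]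
    exact hdp x
  refine ⟨u, contDiff_one_iff_deriv.2 ⟨fun x => (hud x).differentiableAt, hdc⟩, hi, hid, ?_, ?_, ?_⟩
  · simp [hu, hh0, h0]
  · have e1 : ∫ x, |u x| ^ m = 2 * ∫ x in Ioi (0:ℝ), |u x| ^ m := by
      rw [← integral_comp_abs (f := fun x => |u x| ^ m)]
      congr 1; ext x
      rcases abs_choice x with h | h <;> rw [h]
      simp only [hu, hhe]
    have e2 : ∫ x in Ioi (0:ℝ), |u x| ^ m =
        (∫ x in Ioc 0 ε, |u x| ^ m) + ∫ x in Ioi ε, |u x| ^ m := by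
      rw [← Ioc_union_Ioi_eq_Ioi hε.le]
      exact setIntegral_union (Ioc_disjoint_Ioi le_rfl) measurableSet_Ioi hi2 hi1
    have e3 : ∫ x in Ioi ε, |u x| ^ m ≤ 1 / s := by
      rw [← hI2]; exact setIntegral_mono_on hi1 hI measurableSet_Ioi hk1
    have e4 : ∫ x in Ioc 0 ε, |u x| ^ m ≤ ε := by
      have := setIntegral_mono_on (g := fun _ => (1:ℝ)) hi2 (by simp) measurableSet_Ioc
        (fun x _ => hk2 x)
      simpa [hε.le] using this
    rw [e1, e2]
    have : 2 / s = 2 * (1 / s) := by ring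
    linarith
  · exact integral_mono hid hi hdp


/-- The sharp one-dimensional L^∞-type Gagliardo-Nirenberg inequality
`‖u‖_∞ ≤ C ‖u‖_{q+1}^{1-θ} ‖u'‖_p^θ` with its optimal constant. -/
theorem stmt9 (p q θ C : ℝ) (hp : 1 < p) (hq : 0 ≤ q)
    (hθ : θ = p / (p + (p - 1) * (q + 1)))
    (hC : C = ((p + (p - 1) * (q + 1)) / (2 * p)) ^ (p / (p + (p - 1) * (q + 1)))) :
    (∀ u : ℝ → ℝ, ContDiff ℝ 1 u →
      Integrable (fun x => |u x| ^ (q + 1)) →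
      Integrable (fun x => |deriv u x| ^ p) →
      ∀ x : ℝ, |u x| ≤ C * (∫ y : ℝ, |u y| ^ (q + 1)) ^ ((1 - θ) / (q + 1)) *
        (∫ y : ℝ, |deriv u y| ^ p) ^ (θ / p)) ∧
    (∀ C' : ℝ, C' < C → ∃ u : ℝ → ℝ, ContDiff ℝ 1 u ∧
      Integrable (fun x => |u x| ^ (q + 1)) ∧
      Integrable (fun x => |deriv u x| ^ p) ∧
      ∃ x : ℝ, C' * (∫ y : ℝ, |u y| ^ (q + 1)) ^ ((1 - θ) / (q + 1)) *
        (∫ y : ℝ, |deriv u y| ^ p) ^ (θ / p) < |u x|) := by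
  set D := p + (p - 1) * (q + 1) with hD
  have hp0 : 0 < p := by linarith
  have hD0 : 0 < D := by rw [hD]; have := mul_pos (sub_pos.2 hp) (by linarith : 0 < q + 1); linarith
  have hm0 : 0 < q + 1 := by linarith
  have hp1 : p - 1 ≠ 0 := by linarith
  have hs0 : 0 < D / p := by positivity
  have hr : p.HolderConjugate (p / (p - 1)) := Real.HolderConjugate.conjExponent hp
  have hθs : θ = 1 / (D / p) := by rw [hθ]; field_simp
  have hθ0 : 0 < θ := by rw [hθ]; positivity
  have ex1 : (1 - θ) / (q + 1) = 1 / (p / (p - 1)) * θ := by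
    rw [hθ]; field_simp; rw [hD]; ring
  have hC' : C = (D / p / 2) ^ θ := by
    rw [hC, hθ]; congr 1; field_simp
  constructor
  · intro u hu hA hB x
    have h := gn_upper p (q + 1) (p / (p - 1)) (D / p) hp (by linarith) hr
      (by rw [hD]; field_simp) u hu hA hB x
    have hA0 : 0 ≤ ∫ y : ℝ, |u y| ^ (q + 1) :=
      integral_nonneg fun y => Real.rpow_nonneg (abs_nonneg _) _
    have hB0 : 0 ≤ ∫ y : ℝ, |deriv u y| ^ p :=
      integral_nonneg fun y => Real.rpow_nonneg (abs_nonneg _) _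
    have h2 := Real.rpow_le_rpow (Real.rpow_nonneg (abs_nonneg _) _) h hθ0.le
    rw [← Real.rpow_mul (abs_nonneg _), hθs, mul_one_div_cancel hs0.ne', Real.rpow_one, ← hθs,
      Real.mul_rpow (by positivity) (by positivity), Real.mul_rpow (by positivity) (by positivity),
      ← Real.rpow_mul hA0, ← Real.rpow_mul hB0, ← hC', ← ex1, one_div_mul_eq_div] at h2
    rw [mul_assoc]
    exact h2
  · intro C' hC'lt
    have hlim : Tendsto (fun ε : ℝ => C' * (2 / (D / p) + 2 * ε) ^ θ) (𝓝[>] 0)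
        (𝓝 (C' * (2 / (D / p)) ^ θ)) := by
      have : ContinuousAt (fun ε : ℝ => C' * (2 / (D / p) + 2 * ε) ^ θ) 0 := by
        refine continuousAt_const.mul (ContinuousAt.rpow_const (by fun_prop) (Or.inr hθ0.le))
      have h := this.tendsto.mono_left (nhdsWithin_le_nhds (s := Ioi 0))
      simpa using h
    have hlt : C' * (2 / (D / p)) ^ θ < 1 := by
      have hpos : 0 < (2 / (D / p)) ^ θ := Real.rpow_pos_of_pos (by positivity) _
      calc C' * (2 / (D / p)) ^ θ < C * (2 / (D / p)) ^ θ := by gcongr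
        _ = 1 := by
          rw [hC', ← Real.mul_rpow (by positivity) (by positivity)]
          rw [div_mul_div_cancel₀ two_ne_zero, div_self hs0.ne', Real.one_rpow]
    obtain ⟨ε, hε, hε0⟩ := ((hlim.eventually (gt_mem_nhds hlt)).and self_mem_nhdsWithin).exists
    obtain ⟨u, hu, hA, hB, hu0, hAle, hBle⟩ := gn_lower p (q + 1) (D / p) hp (by linarith)
      (by rw [hD]; field_simp; ring) ε hε0
    refine ⟨u, hu, hA, hB, 0, ?_⟩
    have hA0 : 0 ≤ ∫ y : ℝ, |u y| ^ (q + 1) :=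
      integral_nonneg fun y => Real.rpow_nonneg (abs_nonneg _) _
    have hB0 : 0 ≤ ∫ y : ℝ, |deriv u y| ^ p :=
      integral_nonneg fun y => Real.rpow_nonneg (abs_nonneg _) _
    rw [hu0, abs_one, mul_assoc]
    rcases le_or_gt C' 0 with hc | hc
    · have := mul_nonneg (Real.rpow_nonneg hA0 ((1 - θ) / (q + 1))) (Real.rpow_nonneg hB0 (θ / p))
      have := mul_nonpos_of_nonpos_of_nonneg hc this
      linarith
    · refine lt_of_le_of_lt (mul_le_mul_of_nonneg_left ?_ hc.le) hε
      have hexp : (1 - θ) / (q + 1) + θ / p = θ := by rw [ex1]; field_simp; ring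
      have h1 : 0 ≤ (1 - θ) / (q + 1) := by
        rw [ex1]; have : 0 < p - 1 := by linarith
        positivity
      calc _ ≤ (∫ y : ℝ, |u y| ^ (q + 1)) ^ ((1 - θ) / (q + 1)) *
            (∫ y : ℝ, |u y| ^ (q + 1)) ^ (θ / p) :=
            mul_le_mul_of_nonneg_left (Real.rpow_le_rpow hB0 hBle (by positivity))
              (Real.rpow_nonneg hA0 _)
        _ = (∫ y : ℝ, |u y| ^ (q + 1)) ^ θ := by
            rw [← Real.rpow_add' hA0 (by rw [hexp]; exact hθ0.ne'), hexp]
        _ ≤ _ := Real.rpow_le_rpow hA0 hAle hθ0.le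
end

section
/- Let d ≥ 1 be an integer, p > d, q ≥ 0 real numbers, and set θ = pd/(dp + (p−d)(q+1)). Suppose u_c : (0,∞) → ℝ is continuously differentiable, nonincreasing, nonnegative, satisfies lim_{r→0⁺} u_c(r) = 1 and lim_{r→∞} u_c(r) = 0, the function r ↦ r^{d−1}|u_c'(r)|^{p−2}u_c'(r) is differentiable on (0,∞) with derivative r^{d−1} u_c(r)^q, and ∫_0^∞ r^{d−1}(|u_c'(r)|^p + u_c(r)^{q+1}) dr < ∞. Set M_c = ∫_{ℝ^d} u_c(‖x‖)^{q+1} dx and C = θ^{−θ/p} (1−θ)^{θ/p} M_c^{−θ/d}. Then for every continuously differentiable u : ℝ^d → ℝ with ∫_{ℝ^d} |u(x)|^{q+1} dx < ∞ and ∫_{ℝ^d} ‖∇u(x)‖^p dx < ∞, one has sup_{x∈ℝ^d} |u(x)| ≤ C · (∫_{ℝ^d} |u|^{q+1} dx)^{(1−θ)/(q+1)} · (∫_{ℝ^d} ‖∇u(x)‖^p dx)^{θ/p}; moreover C is the smallest constant for which this inequality holds for all such u. -/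
open Filter Set Topology MeasureTheory

structure GNHyp (d : ℕ) (p q : ℝ) (uc uc' : ℝ → ℝ) : Prop where
  hd : 1 ≤ d
  hp : (d : ℝ) < p
  hq : 0 ≤ q
  hderivc : ∀ r ∈ Ioi (0:ℝ), HasDerivAt uc (uc' r) r
  hcc : ContinuousOn uc' (Ioi 0)
  hmono : AntitoneOn uc (Ioi 0)
  hnn : ∀ r ∈ Ioi (0:ℝ), 0 ≤ uc r
  hlim0 : Tendsto uc (𝓝[>] 0) (𝓝 1)
  hliminf : Tendsto uc atTop (𝓝 0)
  hode : ∀ r ∈ Ioi (0:ℝ),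
      HasDerivAt (fun s => s ^ (d - 1) * |uc' s| ^ (p - 2) * uc' s)
        (r ^ (d - 1) * uc r ^ q) r
  hint : IntegrableOn (fun r => r ^ (d - 1) * (|uc' r| ^ p + uc r ^ (q + 1))) (Ioi 0)

lemma gn_ftc {f f' : ℝ → ℝ} {m L : ℝ} (hderiv : ∀ x ∈ Ioi (0:ℝ), HasDerivAt f (f' x) x)
    (hint : IntegrableOn f' (Ioi 0)) (h0 : Tendsto f (𝓝[>] 0) (𝓝 m))
    (hL : Tendsto f atTop (𝓝 L)) : ∫ x in Ioi (0:ℝ), f' x = L - m := by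
  have h := integral_Ioi_of_hasDerivAt_of_tendsto (f := Function.update f 0 m) (f' := f') (a := 0)
    (m := L) ?_ ?_ hint ?_
  · simpa using h
  · rw [continuousWithinAt_update_same]
    simpa [Ici_sdiff_left] using h0
  · intro x hx
    refine (hderiv x hx).congr_of_eventuallyEq ?_
    filter_upwards [isOpen_Ioi.mem_nhds hx] with y hy
    exact Function.update_of_ne (ne_of_gt hy) _ _
  · refine hL.congr' ?_
    filter_upwards [eventually_gt_atTop 0] with y hy
    exact (Function.update_of_ne (ne_of_gt hy) _ _).symm

namespace GNHyp
variable {d : ℕ} {p q : ℝ} {uc uc' : ℝ → ℝ}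

lemma p_gt_one (H : GNHyp d p q uc uc') : 1 < p := by
  have : (1:ℝ) ≤ d := by exact_mod_cast H.hd
  linarith [H.hp]

lemma uc'_nonpos (H : GNHyp d p q uc uc') {r : ℝ} (hr : 0 < r) : uc' r ≤ 0 := by
  have h1 := H.hderivc r hr
  by_contra hlt
  push Not at hlt
  have h2 := h1.hasDerivWithinAt (s := Ioi r)
  have h3 := hasDerivWithinAt_iff_tendsto_slope' (by simp) |>.1 h2
  refine absurd (le_of_tendsto h3 ?_) (not_le.2 hlt)
  filter_upwards [self_mem_nhdsWithin] with y hy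
  rw [slope_def_field]
  have : uc y ≤ uc r := H.hmono hr (lt_trans hr hy : (0:ℝ) < y) (le_of_lt hy)
  exact div_nonpos_of_nonpos_of_nonneg (by linarith) (by have : r < y := hy; linarith)

lemma uc_le_one (H : GNHyp d p q uc uc') {r : ℝ} (hr : 0 < r) : uc r ≤ 1 := by
  refine ge_of_tendsto H.hlim0 ?_
  filter_upwards [Ioo_mem_nhdsGT hr] with y hy
  exact H.hmono hy.1 hr hy.2.le

/-- the flux -/
lemma flux_eq (H : GNHyp d p q uc uc') {r : ℝ} (hr : 0 < r) :
    r ^ (d - 1) * |uc' r| ^ (p - 2) * uc' r = - (r ^ (d - 1) * |uc' r| ^ (p - 1)) := by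
  have h1 := H.uc'_nonpos hr
  have hp := H.p_gt_one
  rcases h1.eq_or_lt with h | h
  · rw [h, abs_zero, Real.zero_rpow (by linarith : p - 1 ≠ 0)]; simp
  · have : |uc' r| ^ (p - 1) = |uc' r| ^ (p - 2) * |uc' r| := by
      rw [← Real.rpow_add_one (abs_pos.2 h.ne).ne']; congr 1; ring
    rw [this, abs_of_neg h]; ring

lemma ode' (H : GNHyp d p q uc uc') {r : ℝ} (hr : 0 < r) :
    HasDerivAt (fun s => s ^ (d - 1) * |uc' s| ^ (p - 1)) (-(r ^ (d - 1) * uc r ^ q)) r := by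
  refine (H.hode r hr).neg.congr_of_eventuallyEq ?_
  filter_upwards [isOpen_Ioi.mem_nhds hr] with y hy
  rw [Pi.neg_apply, H.flux_eq hy, neg_neg]

lemma flux_anti (H : GNHyp d p q uc uc') :
    AntitoneOn (fun s => s ^ (d - 1) * |uc' s| ^ (p - 1)) (Ioi 0) := by
  refine antitoneOn_of_deriv_nonpos (convex_Ioi 0) ?_ ?_ ?_
  · intro x hx; exact (H.ode' hx).continuousAt.continuousWithinAt
  · intro x hx; rw [interior_Ioi] at hx; exact (H.ode' hx).differentiableAt.differentiableWithinAt
  · intro x hx; rw [interior_Ioi] at hx; rw [(H.ode' hx).deriv]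
    have : 0 < x := hx
    have := Real.rpow_nonneg (H.hnn x hx) q
    have : 0 ≤ x ^ (d - 1) * uc x ^ q := by positivity
    linarith

lemma abs_uc'_anti (H : GNHyp d p q uc uc') : AntitoneOn (fun s => |uc' s|) (Ioi 0) := by
  intro r hr s hs hrs
  have hr' : 0 < r := hr
  have hs' : 0 < s := hs
  have h1 := H.flux_anti hr hs hrs
  have h2 : r ^ (d - 1) * |uc' r| ^ (p - 1) ≤ s ^ (d - 1) * |uc' r| ^ (p - 1) := by gcongr
  have h3 : |uc' s| ^ (p - 1) ≤ |uc' r| ^ (p - 1) :=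
    le_of_mul_le_mul_left (h1.trans h2) (by positivity)
  exact (Real.rpow_le_rpow_iff (abs_nonneg _) (abs_nonneg _) (by linarith [H.p_gt_one])).1 h3

lemma prod_deriv (H : GNHyp d p q uc uc') {r : ℝ} (hr : 0 < r) :
    HasDerivAt (fun s => (s ^ (d - 1) * |uc' s| ^ (p - 1)) * uc s)
      (-(r ^ (d - 1) * (|uc' r| ^ p + uc r ^ (q + 1)))) r := by
  refine ((H.ode' hr).mul (H.hderivc r hr)).congr_deriv ?_
  have h1 := H.uc'_nonpos hr
  have hp := H.p_gt_one
  have e1 : uc r ^ (q + 1) = uc r ^ q * uc r := by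
    rw [Real.rpow_add_one' (H.hnn r hr) (by linarith [H.hq])]
  have e2 : |uc' r| ^ p = |uc' r| ^ (p - 1) * |uc' r| := by
    have := Real.rpow_add_one' (abs_nonneg (uc' r)) (y := p - 1) (by linarith)
    rw [← this]; congr 1; ring
  rw [e1, e2, abs_of_nonpos h1]; ring

lemma flux_nonneg {r : ℝ} (hr : 0 < r) : 0 ≤ r ^ (d - 1) * |uc' r| ^ (p - 1) := by positivity

lemma flux_uc_inf (H : GNHyp d p q uc uc') :
    Tendsto (fun s => (s ^ (d - 1) * |uc' s| ^ (p - 1)) * uc s) atTop (𝓝 0) := by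
  have h : Tendsto (fun s => (1 ^ (d - 1) * |uc' 1| ^ (p - 1)) * uc s) atTop (𝓝 0) := by
    simpa using H.hliminf.const_mul (1 ^ (d - 1) * |uc' 1| ^ (p - 1))
  refine squeeze_zero' ?_ ?_ h
  · filter_upwards [eventually_gt_atTop 0] with s hs
    exact mul_nonneg (flux_nonneg hs) (H.hnn s hs)
  · filter_upwards [eventually_ge_atTop 1] with s hs
    have hs0 : (0:ℝ) < s := by linarith
    exact mul_le_mul_of_nonneg_right (H.flux_anti (mem_Ioi.2 one_pos) hs0 hs) (H.hnn s hs0)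

/-- the total one-dimensional energy -/
lemma flux_lim (H : GNHyp d p q uc uc') :
    Tendsto (fun s => s ^ (d - 1) * |uc' s| ^ (p - 1)) (𝓝[>] 0)
      (𝓝 (∫ r in Ioi (0:ℝ), r ^ (d - 1) * (|uc' r| ^ p + uc r ^ (q + 1)))) := by
  set e : ℝ → ℝ := fun r => r ^ (d - 1) * (|uc' r| ^ p + uc r ^ (q + 1)) with he
  have h1 : ∀ r : ℝ, 0 < r → (r ^ (d - 1) * |uc' r| ^ (p - 1)) * uc r = ∫ x in Ioi r, e x := by
    intro r hr
    have hi : IntegrableOn e (Ioi r) := H.hint.mono_set (Ioi_subset_Ioi hr.le)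
    have := integral_Ioi_of_hasDerivAt_of_tendsto' (a := r)
      (fun x (hx : r ≤ x) => H.prod_deriv (lt_of_lt_of_le hr hx)) hi.neg H.flux_uc_inf
    simp only [integral_neg, zero_sub] at this
    have := neg_injective this
    exact this.symm
  have h2 : Tendsto (fun r => ∫ x in Ioi r, e x) (𝓝[>] 0) (𝓝 (∫ x in Ioi 0, e x)) := by
    have hc : ContinuousWithinAt (fun r => ∫ x in (0:ℝ)..r, e x) (Icc 0 1) 0 := by
      have := intervalIntegral.continuousOn_primitive_interval (μ := volume) (f := e) (a := 0) (b := 1) ?_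
      · exact this.continuousWithinAt (by simp) |>.mono (by simp)
      · rw [uIcc_of_le zero_le_one, integrableOn_Icc_iff_integrableOn_Ioc]
        exact H.hint.mono_set (fun x hx => hx.1)
    have hc' : Tendsto (fun r => ∫ x in (0:ℝ)..r, e x) (𝓝[>] 0) (𝓝 0) := by
      have := hc.tendsto
      rw [intervalIntegral.integral_same] at this
      refine this.mono_left ?_
      rw [← nhdsWithin_Ioo_eq_nhdsGT (zero_lt_one' ℝ)]
      exact nhdsWithin_mono _ Ioo_subset_Icc_self
    have h3 : Tendsto (fun r => (∫ x in Ioi 0, e x) - ∫ x in (0:ℝ)..r, e x) (𝓝[>] 0)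
      (𝓝 ((∫ x in Ioi 0, e x) - 0)) := hc'.const_sub _
    rw [sub_zero] at h3
    refine h3.congr' ?_
    filter_upwards [self_mem_nhdsWithin] with r hr
    have hr : (0:ℝ) < r := hr
    rw [intervalIntegral.integral_of_le hr.le, ← Ioc_union_Ioi_eq_Ioi hr.le,
      setIntegral_union (Ioc_disjoint_Ioi le_rfl) measurableSet_Ioi
       (H.hint.mono_set (fun x hx => hx.1)) (H.hint.mono_set (Ioi_subset_Ioi hr.le))]
    ring
  have h3 := h2.div H.hlim0 one_ne_zero
  rw [div_one] at h3
  refine h3.congr' ?_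
  have hpos : ∀ᶠ r in 𝓝[>] 0, 0 < uc r := H.hlim0.eventually (lt_mem_nhds one_pos)
  filter_upwards [self_mem_nhdsWithin, hpos] with r hr hr2
  rw [Pi.div_apply, ← h1 r hr]; field_simp

lemma flux_le (H : GNHyp d p q uc uc') {r : ℝ} (hr : 0 < r) :
    r ^ (d - 1) * |uc' r| ^ (p - 1) ≤
      ∫ r in Ioi (0:ℝ), r ^ (d - 1) * (|uc' r| ^ p + uc r ^ (q + 1)) := by
  refine ge_of_tendsto H.flux_lim ?_
  filter_upwards [Ioo_mem_nhdsGT hr] with y hy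
  exact H.flux_anti hy.1 hr hy.2.le

lemma oneD (H : GNHyp d p q uc uc') {g g' h : ℝ → ℝ} {g0 : ℝ}
    (hg : ∀ r ∈ Ioi (0:ℝ), HasDerivAt g (g' r) r) (hg' : ContinuousOn g' (Ioi 0))
    (hg0 : Tendsto g (𝓝[>] 0) (𝓝 g0)) (hh : IntegrableOn h (Ioi 0))
    (hb1 : ∀ r ∈ Ioi (0:ℝ), |uc' r| ^ (p - 1) * |g' r| + uc r ^ q * |g r| ≤ h r / r ^ (d - 1))
    (hb2 : ∀ r ∈ Ioi (0:ℝ), |g r| ^ (q + 1) / (q + 1) ≤ h r / r ^ (d - 1)) :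
    (∫ r in Ioi (0:ℝ), r ^ (d - 1) * (|uc' r| ^ p + uc r ^ (q + 1))) * |g0| ≤
      ∫ r in Ioi (0:ℝ), h r := by
  set K := ∫ r in Ioi (0:ℝ), r ^ (d - 1) * (|uc' r| ^ p + uc r ^ (q + 1)) with hK
  set φ : ℝ → ℝ := fun s => s ^ (d - 1) * |uc' s| ^ (p - 1) with hφ
  have hp1 := H.p_gt_one
  have hq := H.hq
  set f' : ℝ → ℝ := fun r => -(r ^ (d - 1) * uc r ^ q) * g r + φ r * g' r with hf'
  have hder : ∀ r ∈ Ioi (0:ℝ), HasDerivAt (fun s => φ s * g s) (f' r) r :=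
    fun r hr => (H.ode' hr).mul (hg r hr)
  have hbd : ∀ r ∈ Ioi (0:ℝ), |f' r| ≤ h r := by
    intro r hr
    have hr0 : 0 < r := hr
    have h1 := hb1 r hr
    rw [le_div_iff₀ (by positivity)] at h1
    refine le_trans ?_ h1
    have hu := Real.rpow_nonneg (H.hnn r hr) q
    calc |f' r| ≤ |(-(r ^ (d - 1) * uc r ^ q) * g r)| + |φ r * g' r| := abs_add_le _ _
      _ = _ := by
        simp only [abs_mul, abs_neg, hφ]
        rw [abs_of_pos (by positivity : 0 < r ^ (d - 1)), abs_of_nonneg hu,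
          abs_of_nonneg (by positivity : 0 ≤ |uc' r| ^ (p - 1))]; ring
  have hcont : ContinuousOn f' (Ioi 0) := by
    have c1 : ContinuousOn uc (Ioi 0) := fun x hx => (H.hderivc x hx).continuousAt.continuousWithinAt
    have c2 : ContinuousOn g (Ioi 0) := fun x hx => (hg x hx).continuousAt.continuousWithinAt
    have c3 : ContinuousOn φ (Ioi 0) := fun x hx => (H.ode' hx).continuousAt.continuousWithinAt
    have c4 : ContinuousOn (fun x => uc x ^ q) (Ioi 0) := c1.rpow_const (fun _ _ => Or.inr hq)
    exact (((continuousOn_id.pow _).mul c4).neg.mul c2).add (c3.mul hg')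
  have hint : IntegrableOn f' (Ioi 0) := by
    refine Integrable.mono' hh (hcont.aestronglyMeasurable measurableSet_Ioi) ?_
    filter_upwards [ae_restrict_mem measurableSet_Ioi] with r hr
    exact hbd r hr
  have hlim := tendsto_limUnder_of_hasDerivAt_of_integrableOn_Ioi hder hint
  set L := limUnder atTop (fun s => φ s * g s) with hL
  have hL0 : L = 0 := by
    by_contra hne
    have hpos : 0 < |L| := abs_pos.2 hne
    have hev : ∀ᶠ r in atTop, |L| / 2 < |φ r * g r| :=
      hlim.abs.eventually (lt_mem_nhds (by linarith))
    obtain ⟨R, hR⟩ := (hev.and (eventually_ge_atTop 1)).exists_forall_of_atTop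
    have hKpos : 0 < K := by
      obtain ⟨h1, h2⟩ := hR R le_rfl
      have hR0 : 0 < R := by linarith
      have h3 : φ R ≠ 0 := by
        intro h0; rw [h0] at h1; simp at h1; linarith [abs_nonneg L]
      exact lt_of_lt_of_le (lt_of_le_of_ne (flux_nonneg hR0) h3.symm) (H.flux_le hR0)
    set c := (|L| / 2 / K) ^ (q + 1) / (q + 1) with hc
    have hcpos : 0 < c := by positivity
    have hlow : ∀ r ∈ Ioi R, c ≤ h r := by
      intro r hr
      obtain ⟨h1, h2⟩ := hR r (le_of_lt hr)
      have hr0 : 0 < r := by linarith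
      have h3 : |L| / 2 / K ≤ |g r| := by
        rw [div_le_iff₀ hKpos]
        rw [abs_mul, abs_of_nonneg (flux_nonneg hr0 : 0 ≤ φ r)] at h1
        have := mul_le_mul_of_nonneg_right (H.flux_le hr0) (abs_nonneg (g r))
        nlinarith
      have h4 := hb2 r hr0
      have h5 : (1:ℝ) ≤ r ^ (d - 1) := one_le_pow₀ h2
      have h6 : c ≤ |g r| ^ (q + 1) / (q + 1) := by
        rw [hc]; gcongr
      have h7 := h6.trans h4
      rw [le_div_iff₀ (by linarith)] at h7
      nlinarith
    have hRpos : 0 < R := by linarith [(hR R le_rfl).2]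
    have : IntegrableOn (fun _ : ℝ => c) (Ioi R) := by
      refine Integrable.mono' (hh.mono_set (Ioi_subset_Ioi hRpos.le)) aestronglyMeasurable_const ?_
      filter_upwards [ae_restrict_mem measurableSet_Ioi] with r hr
      rw [Real.norm_of_nonneg hcpos.le]; exact hlow r hr
    rw [integrableOn_const_iff] at this
    simp [hcpos.ne'] at this
  have h0 : Tendsto (fun s => φ s * g s) (𝓝[>] 0) (𝓝 (K * g0)) := H.flux_lim.mul hg0
  have hfin := gn_ftc hder hint h0 hlim
  rw [hL0, zero_sub] at hfin
  have hK0 : 0 ≤ K := (flux_nonneg one_pos).trans (H.flux_le one_pos)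
  calc K * |g0| = |∫ x in Ioi 0, f' x| := by rw [hfin, abs_neg, abs_mul, abs_of_nonneg hK0]
    _ ≤ ∫ x in Ioi 0, |f' x| := abs_integral_le_integral_abs
    _ ≤ _ := by
      refine setIntegral_mono_on hint.abs hh measurableSet_Ioi hbd
end GNHyp

lemma gn_volumeIoiPow_integrable (n : ℕ) (F : ℝ → ℝ) :
    Integrable (fun r : Ioi (0:ℝ) => F r) (Measure.volumeIoiPow n) ↔
      IntegrableOn (fun r => r ^ n * F r) (Ioi 0) := by
  rw [Measure.volumeIoiPow, integrable_withDensity_iff_integrable_smul',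
    integrableOn_iff_comap_subtypeVal measurableSet_Ioi]
  · refine integrable_congr (.of_forall ?_)
    rintro ⟨x, hx : 0 < x⟩
    simp (disch := positivity) [ENNReal.toReal_ofReal]
  · fun_prop
  · simp

lemma gn_volumeIoiPow_integral (n : ℕ) (F : ℝ → ℝ) :
    ∫ r : Ioi (0:ℝ), F r ∂(Measure.volumeIoiPow n) = ∫ r in Ioi (0:ℝ), r ^ n * F r := by
  rw [Measure.volumeIoiPow, integral_withDensity_eq_integral_toReal_smul,
    ← integral_subtype_comap measurableSet_Ioi]
  · refine integral_congr_ae (.of_forall ?_)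
    rintro ⟨x, hx : 0 < x⟩
    simp (disch := positivity) [ENNReal.toReal_ofReal]
  · fun_prop
  · simp

lemma gn_polar {d : ℕ} (hd : 1 ≤ d) (F : EuclideanSpace ℝ (Fin d) → ℝ) (hF : Integrable F) (c : ℝ)
    (h : ∀ ω : EuclideanSpace ℝ (Fin d), ‖ω‖ = 1 →
      IntegrableOn (fun r : ℝ => r ^ (d - 1) * F (r • ω)) (Ioi 0) →
      c ≤ ∫ r in Ioi (0:ℝ), r ^ (d - 1) * F (r • ω)) :
    (d * volume.real (Metric.ball (0 : EuclideanSpace ℝ (Fin d)) 1)) * c ≤ ∫ x, F x := by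
  have : Nonempty (Fin d) := ⟨⟨0, hd⟩⟩
  have hdim : Module.finrank ℝ (EuclideanSpace ℝ (Fin d)) = d := by simp
  let μ : Measure (EuclideanSpace ℝ (Fin d)) := volume
  have mp := μ.measurePreserving_homeomorphUnitSphereProd
  rw [hdim] at mp
  let G : Metric.sphere (0:(EuclideanSpace ℝ (Fin d))) 1 × Ioi (0:ℝ) → ℝ := fun z => F ((z.2 : ℝ) • (z.1 : (EuclideanSpace ℝ (Fin d))))
  have hcomp : ∀ x : ({0}ᶜ : Set (EuclideanSpace ℝ (Fin d))), G (homeomorphUnitSphereProd (EuclideanSpace ℝ (Fin d)) x) = F x := by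
    intro x
    have := congrArg Subtype.val ((homeomorphUnitSphereProd (EuclideanSpace ℝ (Fin d))).symm_apply_apply x)
    rw [homeomorphUnitSphereProd_symm_apply_coe] at this
    simp only [G, this]
  have hemb := (homeomorphUnitSphereProd (EuclideanSpace ℝ (Fin d))).measurableEmbedding
  have hGi : Integrable G (μ.toSphere.prod (Measure.volumeIoiPow (d - 1))) := by
    rw [← mp.integrable_comp_emb hemb]
    have e : G ∘ (homeomorphUnitSphereProd (EuclideanSpace ℝ (Fin d))) = F ∘ (Subtype.val : ({0}ᶜ : Set (EuclideanSpace ℝ (Fin d))) → (EuclideanSpace ℝ (Fin d))) :=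
      funext hcomp
    rw [e, ← integrableOn_iff_comap_subtypeVal (measurableSet_singleton _).compl]
    exact hF.integrableOn
  have hGe : ∫ z, G z ∂(μ.toSphere.prod (Measure.volumeIoiPow (d - 1))) = ∫ x, F x := by
    rw [← mp.integral_comp hemb]
    simp_rw [hcomp]
    rw [integral_subtype_comap (measurableSet_singleton _).compl F, restrict_compl_singleton]
  rw [← hGe, integral_prod _ hGi]
  have hae := hGi.prod_right_ae
  have hle : ∫ ω : Metric.sphere (0:(EuclideanSpace ℝ (Fin d))) 1, c ∂μ.toSphere ≤
      ∫ ω, ∫ r, G (ω, r) ∂(Measure.volumeIoiPow (d - 1)) ∂μ.toSphere := by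
    refine integral_mono_ae (integrable_const _) hGi.integral_prod_left ?_
    filter_upwards [hae] with ω hω
    have hn : ‖(ω : (EuclideanSpace ℝ (Fin d)))‖ = 1 := by simp
    have h1 := (gn_volumeIoiPow_integrable (d - 1) (fun r => F (r • (ω : (EuclideanSpace ℝ (Fin d)))))).1 hω
    have h2 := h ω hn h1
    rw [← gn_volumeIoiPow_integral (d - 1) (fun r => F (r • (ω : (EuclideanSpace ℝ (Fin d)))))] at h2
    exact h2
  rw [integral_const, Measure.toSphere_real_apply_univ, hdim, smul_eq_mul] at hle
  exact hle

namespace GNHyp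
variable {d : ℕ} {p q : ℝ} {uc uc' : ℝ → ℝ}

lemma int_A1 (H : GNHyp d p q uc uc') :
    IntegrableOn (fun r => r ^ (d - 1) * |uc' r| ^ p) (Ioi 0) := by
  have c1 : ContinuousOn (fun x => |uc' x| ^ p) (Ioi 0) :=
    H.hcc.abs.rpow_const (fun _ _ => Or.inr (by linarith [H.p_gt_one]))
  refine Integrable.mono' H.hint
    (((continuousOn_id.pow _).mul c1).aestronglyMeasurable measurableSet_Ioi) ?_
  filter_upwards [ae_restrict_mem measurableSet_Ioi] with r hr
  have hr0 : 0 < r := hr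
  have hu := Real.rpow_nonneg (H.hnn r hr) (q + 1)
  have h0 : 0 ≤ r ^ (d - 1) * |uc' r| ^ p := by positivity
  calc ‖r ^ (d - 1) * |uc' r| ^ p‖ = r ^ (d - 1) * |uc' r| ^ p := Real.norm_of_nonneg h0
    _ ≤ _ := by gcongr; linarith

lemma int_M1 (H : GNHyp d p q uc uc') :
    IntegrableOn (fun r => r ^ (d - 1) * uc r ^ (q + 1)) (Ioi 0) := by
  refine (H.hint.sub H.int_A1).congr (.of_forall fun r => ?_)
  simp; ring

lemma finrank_eq : Module.finrank ℝ (EuclideanSpace ℝ (Fin d)) = d := by simp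

lemma int_A (H : GNHyp d p q uc uc') :
    Integrable (fun x : EuclideanSpace ℝ (Fin d) => |uc' ‖x‖| ^ p) := by
  have : Nonempty (Fin d) := ⟨⟨0, H.hd⟩⟩
  rw [integrable_fun_norm_addHaar volume (f := fun r => |uc' r| ^ p), finrank_eq]
  exact H.int_A1

lemma int_M (H : GNHyp d p q uc uc') :
    Integrable (fun x : EuclideanSpace ℝ (Fin d) => uc ‖x‖ ^ (q + 1)) := by
  have : Nonempty (Fin d) := ⟨⟨0, H.hd⟩⟩
  rw [integrable_fun_norm_addHaar volume (f := fun r => uc r ^ (q + 1)), finrank_eq]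
  exact H.int_M1

lemma total (H : GNHyp d p q uc uc') :
    (d * volume.real (Metric.ball (0 : EuclideanSpace ℝ (Fin d)) 1)) *
      (∫ r in Ioi (0:ℝ), r ^ (d - 1) * (|uc' r| ^ p + uc r ^ (q + 1))) =
    (∫ x : EuclideanSpace ℝ (Fin d), |uc' ‖x‖| ^ p) +
      ∫ x : EuclideanSpace ℝ (Fin d), uc ‖x‖ ^ (q + 1) := by
  have : Nonempty (Fin d) := ⟨⟨0, H.hd⟩⟩
  rw [← integral_add H.int_A H.int_M,
    integral_fun_norm_addHaar volume (fun r => |uc' r| ^ p + uc r ^ (q + 1)), finrank_eq]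
  simp [mul_assoc]

lemma ae_ne_zero (hd : 1 ≤ d) : ∀ᵐ x : EuclideanSpace ℝ (Fin d), x ≠ 0 := by
  have : Nonempty (Fin d) := ⟨⟨0, hd⟩⟩
  simp [ae_iff]

lemma M_pos (H : GNHyp d p q uc uc') :
    0 < ∫ x : EuclideanSpace ℝ (Fin d), uc ‖x‖ ^ (q + 1) := by
  have : Nonempty (Fin d) := ⟨⟨0, H.hd⟩⟩
  have hnn : 0 ≤ᵐ[volume] fun x : EuclideanSpace ℝ (Fin d) => uc ‖x‖ ^ (q + 1) := by
    filter_upwards [ae_ne_zero H.hd] with x hx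
    exact Real.rpow_nonneg (H.hnn _ (norm_pos_iff.2 hx)) _
  rw [integral_pos_iff_support_of_nonneg_ae hnn H.int_M]
  have hpos : ∀ᶠ r in 𝓝[>] 0, 0 < uc r := H.hlim0.eventually (lt_mem_nhds one_pos)
  obtain ⟨ε, hε, hsub⟩ := mem_nhdsGT_iff_exists_Ioo_subset.1 hpos
  have hε : 0 < ε := hε
  have : 0 < volume (Metric.ball (0 : EuclideanSpace ℝ (Fin d)) ε \ {0}) := by
    rw [measure_sdiff_null (measure_singleton _)]
    exact Metric.measure_ball_pos _ _ hε
  refine lt_of_lt_of_le this (measure_mono ?_)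
  rintro x ⟨hx1, hx2⟩
  have h1 : 0 < ‖x‖ := norm_pos_iff.2 hx2
  have h2 : ‖x‖ < ε := by simpa using hx1
  exact (Real.rpow_pos_of_pos (hsub ⟨h1, h2⟩) _).ne'

lemma A_nonneg : 0 ≤ ∫ x : EuclideanSpace ℝ (Fin d), |uc' ‖x‖| ^ p :=
  integral_nonneg fun _ => by positivity

/-- the basic dual inequality -/
lemma base (H : GNHyp d p q uc uc') {u : EuclideanSpace ℝ (Fin d) → ℝ} (hu : ContDiff ℝ 1 u)
    (h1 : Integrable (fun x => |u x| ^ (q + 1))) (h2 : Integrable (fun x => ‖fderiv ℝ u x‖ ^ p)) :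
    ((∫ x : EuclideanSpace ℝ (Fin d), |uc' ‖x‖| ^ p) +
      ∫ x : EuclideanSpace ℝ (Fin d), uc ‖x‖ ^ (q + 1)) * |u 0| ≤
    (1 - 1 / p) * (∫ x : EuclideanSpace ℝ (Fin d), |uc' ‖x‖| ^ p)
      + 1 / p * (∫ x, ‖fderiv ℝ u x‖ ^ p)
      + (1 - 1 / (q + 1)) * (∫ x : EuclideanSpace ℝ (Fin d), uc ‖x‖ ^ (q + 1))
      + 1 / (q + 1) * (∫ x, |u x| ^ (q + 1)) := by
  have hp1 := H.p_gt_one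
  have hq := H.hq
  have young : ∀ {s a b : ℝ}, 1 ≤ s → 0 ≤ a → 0 ≤ b →
      a ^ (s - 1) * b ≤ (1 - 1 / s) * a ^ s + 1 / s * b ^ s := by
    intro s a b hs ha hb
    have h1s : 1 / s ≤ 1 := by rw [div_le_one (by linarith)]; exact hs
    have hs0 : 0 < 1 / s := by positivity
    have := Real.geom_mean_le_arith_mean2_weighted (w₁ := 1 - 1 / s) (w₂ := 1 / s) (p₁ := a ^ s)
      (p₂ := b ^ s) (by linarith) hs0.le (by positivity) (by positivity) (by ring)
    rwa [← Real.rpow_mul ha, ← Real.rpow_mul hb, mul_one_div_cancel (by linarith), Real.rpow_one,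
      show s * (1 - 1 / s) = s - 1 by field_simp] at this
  set F : EuclideanSpace ℝ (Fin d) → ℝ := fun x => (1 - 1 / p) * |uc' ‖x‖| ^ p
      + 1 / p * ‖fderiv ℝ u x‖ ^ p + (1 - 1 / (q + 1)) * uc ‖x‖ ^ (q + 1)
      + 1 / (q + 1) * |u x| ^ (q + 1) with hF
  have i1 := H.int_A.const_mul (1 - 1 / p)
  have i2 := h2.const_mul (1 / p)
  have i3 := H.int_M.const_mul (1 - 1 / (q + 1))
  have i4 := h1.const_mul (1 / (q + 1))
  have hFi : Integrable F := ((i1.add i2).add i3).add i4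
  have hFe : ∫ x, F x = (1 - 1 / p) * (∫ x : EuclideanSpace ℝ (Fin d), |uc' ‖x‖| ^ p)
      + 1 / p * (∫ x, ‖fderiv ℝ u x‖ ^ p)
      + (1 - 1 / (q + 1)) * (∫ x : EuclideanSpace ℝ (Fin d), uc ‖x‖ ^ (q + 1))
      + 1 / (q + 1) * (∫ x, |u x| ^ (q + 1)) := by
    simp only [hF]
    rw [integral_add (by exact (i1.add i2).add i3) i4, integral_add (by exact i1.add i2) i3,
      integral_add i1 i2, integral_const_mul, integral_const_mul, integral_const_mul, integral_const_mul]
  rw [← hFe, ← H.total, mul_assoc]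
  refine gn_polar H.hd F hFi _ ?_
  intro ω hω hint
  have hdu : ∀ r : ℝ, HasDerivAt (fun r : ℝ => u (r • ω)) (fderiv ℝ u (r • ω) ω) r := by
    intro r
    have e1 := (hu.differentiable one_ne_zero (r • ω)).hasFDerivAt
    have e2 : HasDerivAt (fun r : ℝ => r • ω) ω r := by
      simpa using (hasDerivAt_id r).smul_const ω
    exact e1.comp_hasDerivAt r e2
  have hFn : ∀ r ∈ Ioi (0:ℝ), r ^ (d - 1) * F (r • ω) / r ^ (d - 1) = F (r • ω) := by
    intro r hr
    have : (0:ℝ) < r := hr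
    field_simp
  have hnr : ∀ r ∈ Ioi (0:ℝ), ‖r • ω‖ = r := by
    intro r hr
    rw [norm_smul, hω, mul_one, Real.norm_of_nonneg (le_of_lt hr)]
  have w1 : 0 ≤ 1 - 1 / p := by
    have : 1 / p ≤ 1 := by rw [div_le_one (by linarith)]; exact hp1.le
    linarith
  have w2 : 0 ≤ 1 - 1 / (q + 1) := by
    have : 1 / (q + 1) ≤ 1 := by rw [div_le_one (by linarith)]; linarith
    linarith
  refine H.oneD (g := fun r => u (r • ω)) (g' := fun r => fderiv ℝ u (r • ω) ω) (g0 := u 0)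
    (fun r _ => hdu r) ?_ ?_ hint ?_ ?_
  · have : Continuous (fderiv ℝ u) := hu.continuous_fderiv one_ne_zero
    exact Continuous.continuousOn (by fun_prop)
  · have hc : Continuous (fun r : ℝ => u (r • ω)) := by
      have := hu.continuous
      fun_prop
    have := hc.tendsto 0
    rw [zero_smul] at this
    exact this.mono_left nhdsWithin_le_nhds
  · intro r hr
    rw [hFn r hr]
    simp only [hF]
    rw [hnr r hr]
    have y1 := young hp1.le (abs_nonneg (uc' r)) (norm_nonneg (fderiv ℝ u (r • ω)))
    have y2 := young (s := q + 1) (by linarith) (H.hnn r hr) (abs_nonneg (u (r • ω)))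
    rw [add_sub_cancel_right] at y2
    have y3 : |fderiv ℝ u (r • ω) ω| ≤ ‖fderiv ℝ u (r • ω)‖ := by
      have := (fderiv ℝ u (r • ω)).le_opNorm ω
      rwa [hω, mul_one] at this
    have y4 : |uc' r| ^ (p - 1) * |fderiv ℝ u (r • ω) ω| ≤
      |uc' r| ^ (p - 1) * ‖fderiv ℝ u (r • ω)‖ := by gcongr
    linarith
  · intro r hr
    rw [hFn r hr]
    simp only [hF]
    rw [hnr r hr]
    have z1 := Real.rpow_nonneg (H.hnn r hr) (q + 1)
    have z2 : 0 ≤ (1 - 1 / p) * |uc' r| ^ p := by positivity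
    have z3 : 0 ≤ 1 / p * ‖fderiv ℝ u (r • ω)‖ ^ p := by positivity
    have z4 : 0 ≤ (1 - 1 / (q + 1)) * uc r ^ (q + 1) := by positivity
    have z5 : |u (r • ω)| ^ (q + 1) / (q + 1) = 1 / (q + 1) * |u (r • ω)| ^ (q + 1) := by ring
    linarith

/-- the scaled dual inequality -/
lemma scaled (H : GNHyp d p q uc uc') {u : EuclideanSpace ℝ (Fin d) → ℝ} (hu : ContDiff ℝ 1 u)
    (h1 : Integrable (fun x => |u x| ^ (q + 1))) (h2 : Integrable (fun x => ‖fderiv ℝ u x‖ ^ p))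
    (x₀ : EuclideanSpace ℝ (Fin d)) {s l : ℝ} (hs : 0 < s) (hl : 0 < l) :
    ((∫ x : EuclideanSpace ℝ (Fin d), |uc' ‖x‖| ^ p) +
      ∫ x : EuclideanSpace ℝ (Fin d), uc ‖x‖ ^ (q + 1)) * (s * |u x₀|) ≤
    (1 - 1 / p) * (∫ x : EuclideanSpace ℝ (Fin d), |uc' ‖x‖| ^ p)
      + 1 / p * (s ^ p * l ^ (p - d) * ∫ x, ‖fderiv ℝ u x‖ ^ p)
      + (1 - 1 / (q + 1)) * (∫ x : EuclideanSpace ℝ (Fin d), uc ‖x‖ ^ (q + 1))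
      + 1 / (q + 1) * (s ^ (q + 1) * l ^ (-(d:ℝ)) * ∫ x, |u x| ^ (q + 1)) := by
  set v : EuclideanSpace ℝ (Fin d) → ℝ := fun x => s * u (x₀ + l • x) with hv
  have hvc : ContDiff ℝ 1 v := by
    have : ContDiff ℝ 1 (fun x : EuclideanSpace ℝ (Fin d) => x₀ + l • x) := by fun_prop
    exact contDiff_const.mul (hu.comp this)
  have hvd : ∀ x, fderiv ℝ v x = (s * l) • fderiv ℝ u (x₀ + l • x) := by
    intro x
    have e1 := (hu.differentiable one_ne_zero (x₀ + l • x)).hasFDerivAt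
    have e2 : HasFDerivAt (fun x : EuclideanSpace ℝ (Fin d) => x₀ + l • x)
      (l • ContinuousLinearMap.id ℝ (EuclideanSpace ℝ (Fin d))) x :=
      ((hasFDerivAt_id x).const_smul l).const_add x₀
    have e3 := ((e1.comp x e2).const_mul s).fderiv
    rw [show fderiv ℝ v x = _ from e3]
    ext y
    simp; ring
  have key : ∀ f : EuclideanSpace ℝ (Fin d) → ℝ,
      ∫ x, f (x₀ + l • x) = l ^ (-(d:ℝ)) * ∫ x, f x := by
    intro f
    have := Measure.integral_comp_smul (volume : Measure (EuclideanSpace ℝ (Fin d)))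
      (fun x => f (x₀ + x)) l
    rw [this, integral_add_left_eq_self (μ := volume) f x₀, finrank_eq, smul_eq_mul,
      abs_of_nonneg (by positivity), Real.rpow_neg hl.le, Real.rpow_natCast]
  have keyi : ∀ f : EuclideanSpace ℝ (Fin d) → ℝ, Integrable f →
      Integrable (fun x => f (x₀ + l • x)) := by
    intro f hf
    exact (hf.comp_add_left x₀).comp_smul hl.ne'
  have ev : ∀ x, |v x| ^ (q + 1) = s ^ (q + 1) * |u (x₀ + l • x)| ^ (q + 1) := by
    intro x
    simp only [hv]
    rw [abs_mul, abs_of_pos hs, Real.mul_rpow hs.le (abs_nonneg _)]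
  have edv : ∀ x, ‖fderiv ℝ v x‖ ^ p = (s * l) ^ p * ‖fderiv ℝ u (x₀ + l • x)‖ ^ p := by
    intro x
    rw [hvd, norm_smul, Real.norm_of_nonneg (by positivity), Real.mul_rpow (by positivity)
      (norm_nonneg _)]
  have hb := H.base (u := v) hvc ?_ ?_
  · simp_rw [ev, edv] at hb
    rw [integral_const_mul, integral_const_mul, key (fun x => ‖fderiv ℝ u x‖ ^ p),
      key (fun x => |u x| ^ (q + 1))] at hb
    have e0 : |v 0| = s * |u x₀| := by simp [hv, abs_mul, abs_of_pos hs]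
    rw [e0, Real.mul_rpow hs.le hl.le] at hb
    have e1 : l ^ (p - d) = l ^ p * l ^ (-(d:ℝ)) := by
      rw [← Real.rpow_add hl]; rfl
    rw [e1]
    refine hb.trans (le_of_eq ?_)
    ring
  · simp_rw [ev]
    exact (keyi _ h1).const_mul _
  · simp_rw [edv]
    exact (keyi (fun x => ‖fderiv ℝ u x‖ ^ p) h2).const_mul _

/-- regularized profile -/
lemma approx (H : GNHyp d p q uc uc') {ε : ℝ} (hε : 0 < ε) :
    ∃ u : EuclideanSpace ℝ (Fin d) → ℝ, ContDiff ℝ 1 u ∧ u 0 = uc ε ∧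
      Integrable (fun x => |u x| ^ (q + 1)) ∧ Integrable (fun x => ‖fderiv ℝ u x‖ ^ p) ∧
      (∫ x, |u x| ^ (q + 1)) ≤ (∫ x : EuclideanSpace ℝ (Fin d), uc ‖x‖ ^ (q + 1)) ∧
      (∫ x, ‖fderiv ℝ u x‖ ^ p) ≤ (∫ x : EuclideanSpace ℝ (Fin d), |uc' ‖x‖| ^ p) := by
  have hp1 := H.p_gt_one
  have hq := H.hq
  set ρ : EuclideanSpace ℝ (Fin d) → ℝ := fun x => √(‖x‖ ^ 2 + ε ^ 2) with hρ
  have hρpos : ∀ x, 0 < ρ x := fun x => Real.sqrt_pos.2 (by positivity)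
  have hρge : ∀ x, ‖x‖ ≤ ρ x := fun x => Real.le_sqrt_of_sq_le (by nlinarith)
  have hρc : ContDiff ℝ 1 ρ := by
    refine ContDiff.sqrt ?_ (fun x => by positivity)
    exact (contDiff_norm_sq ℝ).add contDiff_const
  have huc : ContDiffOn ℝ 1 uc (Ioi 0) := by
    rw [show (1 : WithTop ℕ∞) = 0 + 1 from rfl, contDiffOn_succ_iff_deriv_of_isOpen isOpen_Ioi]
    refine ⟨fun x hx => (H.hderivc x hx).differentiableAt.differentiableWithinAt, by simp, ?_⟩
    rw [contDiffOn_zero]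
    exact H.hcc.congr fun x hx => (H.hderivc x hx).deriv
  set u : EuclideanSpace ℝ (Fin d) → ℝ := fun x => uc (ρ x) with hu
  have huC : ContDiff ℝ 1 u := huc.comp_contDiff hρc hρpos
  have hρd : ∀ x, ‖fderiv ℝ ρ x‖ ≤ 1 := by
    intro x
    have h1 : HasFDerivAt (fun x : EuclideanSpace ℝ (Fin d) => ‖x‖ ^ 2 + ε ^ 2)
        (2 • (innerSL ℝ x)) x := ((hasStrictFDerivAt_norm_sq x).hasFDerivAt).add_const _
    have h2 := h1.sqrt (by positivity)
    rw [show fderiv ℝ ρ x = _ from h2.fderiv]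
    have h3 : ‖(2 • (innerSL ℝ x))‖ = 2 * ‖x‖ := by
      rw [two_nsmul, ← two_smul ℝ, norm_smul, innerSL_apply_norm]; simp
    rw [norm_smul, h3, Real.norm_of_nonneg (by positivity)]
    have h4 := hρge x
    have h5 := hρpos x
    change 1 / (2 * ρ x) * (2 * ‖x‖) ≤ 1
    rw [div_mul_eq_mul_div, one_mul, div_le_one (by positivity)]
    linarith
  have hud : ∀ x, ‖fderiv ℝ u x‖ ≤ |uc' (ρ x)| := by
    intro x
    have h1 := (H.hderivc _ (hρpos x)).comp_hasFDerivAt x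
      (hρc.differentiable one_ne_zero x).hasFDerivAt
    rw [show fderiv ℝ u x = _ from h1.fderiv, norm_smul, Real.norm_eq_abs]
    exact mul_le_of_le_one_right (abs_nonneg _) (hρd x)
  have b1 : ∀ᵐ x : EuclideanSpace ℝ (Fin d), |u x| ^ (q + 1) ≤ uc ‖x‖ ^ (q + 1) := by
    filter_upwards [ae_ne_zero H.hd] with x hx
    have hx' : 0 < ‖x‖ := norm_pos_iff.2 hx
    rw [abs_of_nonneg (H.hnn _ (hρpos x))]
    exact Real.rpow_le_rpow (H.hnn _ (hρpos x)) (H.hmono hx' (hρpos x) (hρge x)) (by linarith)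
  have b2 : ∀ᵐ x : EuclideanSpace ℝ (Fin d), ‖fderiv ℝ u x‖ ^ p ≤ |uc' ‖x‖| ^ p := by
    filter_upwards [ae_ne_zero H.hd] with x hx
    have hx' : 0 < ‖x‖ := norm_pos_iff.2 hx
    exact Real.rpow_le_rpow (norm_nonneg _)
      ((hud x).trans (H.abs_uc'_anti hx' (hρpos x) (hρge x))) (by linarith)
  have i1 : Integrable (fun x => |u x| ^ (q + 1)) := by
    refine H.int_M.mono' ?_ ?_
    · have := huC.continuous
      exact (this.abs.rpow_const (fun _ => Or.inr (by linarith))).aestronglyMeasurable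
    · filter_upwards [b1] with x hx
      rwa [Real.norm_of_nonneg (by positivity)]
  have i2 : Integrable (fun x => ‖fderiv ℝ u x‖ ^ p) := by
    refine H.int_A.mono' ?_ ?_
    · have := huC.continuous_fderiv one_ne_zero
      exact (this.norm.rpow_const (fun _ => Or.inr (by linarith))).aestronglyMeasurable
    · filter_upwards [b2] with x hx
      rwa [Real.norm_of_nonneg (by positivity)]
  refine ⟨u, huC, ?_, i1, i2, integral_mono_ae i1 H.int_M b1, integral_mono_ae i2 H.int_A b2⟩
  simp [hu, hρ, Real.sqrt_sq hε.le]

lemma pohozaev (H : GNHyp d p q uc uc') :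
    (∫ x : EuclideanSpace ℝ (Fin d), |uc' ‖x‖| ^ p) * ((p - d) / p) =
      (∫ x : EuclideanSpace ℝ (Fin d), uc ‖x‖ ^ (q + 1)) * (d / (q + 1)) := by
  have hp1 := H.p_gt_one
  have hq := H.hq
  set A := ∫ x : EuclideanSpace ℝ (Fin d), |uc' ‖x‖| ^ p with hA
  set M := ∫ x : EuclideanSpace ℝ (Fin d), uc ‖x‖ ^ (q + 1) with hM
  have hpos : ∀ᶠ r in 𝓝[>] 0, 0 < uc r := H.hlim0.eventually (lt_mem_nhds one_pos)
  set ψ : ℝ → ℝ := fun l => (1 - 1 / p) * A + 1 / p * (l ^ (p - d) * A)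
    + (1 - 1 / (q + 1)) * M + 1 / (q + 1) * (l ^ (-(d:ℝ)) * M) with hψ
  have key : ∀ l : ℝ, 0 < l → A + M ≤ ψ l := by
    intro l hl
    have hlim : Tendsto (fun ε => (A + M) * uc ε) (𝓝[>] 0) (𝓝 ((A + M) * 1)) :=
      H.hlim0.const_mul _
    rw [mul_one] at hlim
    refine le_of_tendsto hlim ?_
    filter_upwards [self_mem_nhdsWithin] with ε hε
    obtain ⟨u, huC, hu0, i1, i2, hM', hA'⟩ := H.approx hε
    have := H.scaled huC i1 i2 0 (s := 1) one_pos hl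
    rw [Real.one_rpow, Real.one_rpow, one_mul, one_mul, one_mul, hu0, abs_of_nonneg (H.hnn ε hε)]
      at this
    refine this.trans ?_
    simp only [hψ]
    gcongr
  have hmin : IsLocalMin ψ 1 := by
    filter_upwards [isOpen_Ioi.mem_nhds (zero_lt_one' ℝ)] with l hl
    have : ψ 1 = A + M := by simp [hψ]; ring
    rw [this]; exact key l hl
  have hd1 : HasDerivAt ψ (1 / p * ((p - d) * A) + 1 / (q + 1) * (-(d:ℝ) * M)) 1 := by
    have e1 : HasDerivAt (fun l : ℝ => l ^ (p - d)) (p - d) 1 := by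
      simpa using Real.hasDerivAt_rpow_const (x := 1) (p := p - d) (Or.inl one_ne_zero)
    have e2 : HasDerivAt (fun l : ℝ => l ^ (-(d:ℝ))) (-(d:ℝ)) 1 := by
      simpa using Real.hasDerivAt_rpow_const (x := 1) (p := -(d:ℝ)) (Or.inl one_ne_zero)
    exact ((((e1.mul_const A).const_mul (1 / p)).const_add _).add_const _).add
      ((e2.mul_const M).const_mul _)
  have h0 := hmin.hasDerivAt_eq_zero hd1
  linear_combination h0

end GNHyp

lemma gn_const {d p q θ A M C : ℝ} (hd : 0 < d) (hp : d < p) (hq : 0 ≤ q)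
    (hθ : θ = p * d / (d * p + (p - d) * (q + 1))) (hM : 0 < M)
    (hpoh : A * ((p - d) / p) = M * (d / (q + 1)))
    (hC : C = θ ^ (-(θ / p)) * (1 - θ) ^ (θ / p) * M ^ (-(θ / d))) :
    0 < A ∧ 0 < C ∧ C * A ^ (θ / p) * M ^ ((1 - θ) / (q + 1)) = 1 := by
  have hp0 : 0 < p := by linarith
  have hpd : 0 < p - d := by linarith
  have hD : 0 < d * p + (p - d) * (q + 1) := by positivity
  have hθ0 : 0 < θ := by rw [hθ]; positivity
  have h1θ : 1 - θ = (p - d) * (q + 1) / (d * p + (p - d) * (q + 1)) := by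
    rw [hθ]; field_simp; ring
  have h1θ0 : 0 < 1 - θ := by rw [h1θ]; positivity
  have hA : A = M * (θ * (1 - θ)⁻¹) := by
    rw [h1θ, hθ]
    field_simp at hpoh ⊢
    linear_combination hpoh
  have hC0 : 0 < C := by rw [hC]; positivity
  refine ⟨by rw [hA]; positivity, hC0, ?_⟩
  have hexp : (1 - θ) / (q + 1) = θ / d - θ / p := by
    rw [h1θ, hθ]; field_simp
  rw [hexp, hC, hA, Real.mul_rpow hM.le (by positivity), Real.mul_rpow hθ0.le (by positivity),
    Real.inv_rpow h1θ0.le, Real.rpow_neg hθ0.le, Real.rpow_neg hM.le, Real.rpow_sub hM]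
  have := Real.rpow_pos_of_pos hθ0 (θ / p)
  have := Real.rpow_pos_of_pos h1θ0 (θ / p)
  have := Real.rpow_pos_of_pos hM (θ / p)
  have := Real.rpow_pos_of_pos hM (θ / d)
  field_simp

lemma gn_scale {d p q θ A M G N : ℝ} (hd : 0 < d) (hp : d < p) (hq : 0 ≤ q)
    (hθ : θ = p * d / (d * p + (p - d) * (q + 1))) (hA : 0 < A) (hM : 0 < M) (hG : 0 < G)
    (hN : 0 < N) :
    ∃ s l : ℝ, 0 < s ∧ 0 < l ∧ s ^ p * l ^ (p - d) * G = A ∧ s ^ (q + 1) * l ^ (-d) * N = M ∧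
      s * (G ^ (θ / p) * N ^ ((1 - θ) / (q + 1))) = A ^ (θ / p) * M ^ ((1 - θ) / (q + 1)) := by
  have hp0 : 0 < p := by linarith
  have hpd : 0 < p - d := by linarith
  have hD : 0 < d * p + (p - d) * (q + 1) := by positivity
  have h1θ : 1 - θ = (p - d) * (q + 1) / (d * p + (p - d) * (q + 1)) := by
    rw [hθ]; field_simp; ring
  set D := d * p + (p - d) * (q + 1) with hDdef
  have hX : 0 < A / G := by positivity
  have hY : 0 < M / N := by positivity
  have ex1 : θ / p = d / D := by rw [hθ]; field_simp
  have ex2 : (1 - θ) / (q + 1) = (p - d) / D := by rw [h1θ]; field_simp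
  refine ⟨(A / G) ^ (d / D) * (M / N) ^ ((p - d) / D),
    (A / G) ^ ((q + 1) / D) * (M / N) ^ (-p / D), by positivity, by positivity, ?_, ?_, ?_⟩
  · rw [Real.mul_rpow (by positivity) (by positivity), Real.mul_rpow (by positivity) (by positivity),
      ← Real.rpow_mul hX.le, ← Real.rpow_mul hX.le, ← Real.rpow_mul hY.le, ← Real.rpow_mul hY.le]
    calc _ = ((A / G) ^ (d / D * p) * (A / G) ^ ((q + 1) / D * (p - d))) *
        ((M / N) ^ ((p - d) / D * p) * (M / N) ^ (-p / D * (p - d))) * G := by ring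
      _ = A := by
        rw [← Real.rpow_add hX, ← Real.rpow_add hY,
          show d / D * p + (q + 1) / D * (p - d) = 1 by field_simp; rw [hDdef]; ring,
          show (p - d) / D * p + -p / D * (p - d) = 0 by ring]
        simp; field_simp
  · rw [Real.mul_rpow (by positivity) (by positivity), Real.mul_rpow (by positivity) (by positivity),
      ← Real.rpow_mul hX.le, ← Real.rpow_mul hX.le, ← Real.rpow_mul hY.le, ← Real.rpow_mul hY.le]
    calc _ = ((A / G) ^ (d / D * (q + 1)) * (A / G) ^ ((q + 1) / D * (-d))) *
        ((M / N) ^ ((p - d) / D * (q + 1)) * (M / N) ^ (-p / D * (-d))) * N := by ring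
      _ = M := by
        rw [← Real.rpow_add hX, ← Real.rpow_add hY,
          show (p - d) / D * (q + 1) + -p / D * (-d) = 1 by field_simp; rw [hDdef]; ring,
          show d / D * (q + 1) + (q + 1) / D * (-d) = 0 by ring]
        simp; field_simp
  · rw [ex1, ex2, Real.div_rpow hA.le hG.le, Real.div_rpow hM.le hN.le]
    have := Real.rpow_pos_of_pos hG (d / D)
    have := Real.rpow_pos_of_pos hN ((p - d) / D)
    field_simp

theorem stmt10 (d : ℕ) (hd : 1 ≤ d) (p q θ : ℝ) (hp : (d : ℝ) < p) (hq : 0 ≤ q)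
    (hθ : θ = p * d / (d * p + (p - d) * (q + 1)))
    (uc uc' : ℝ → ℝ)
    (hderivc : ∀ r ∈ Ioi (0:ℝ), HasDerivAt uc (uc' r) r)
    (hcc : ContinuousOn uc' (Ioi 0))
    (hmono : AntitoneOn uc (Ioi 0))
    (hnn : ∀ r ∈ Ioi (0:ℝ), 0 ≤ uc r)
    (hlim0 : Tendsto uc (𝓝[>] 0) (𝓝 1))
    (hliminf : Tendsto uc atTop (𝓝 0))
    (hode : ∀ r ∈ Ioi (0:ℝ),
      HasDerivAt (fun s => s ^ (d - 1) * |uc' s| ^ (p - 2) * uc' s)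
        (r ^ (d - 1) * uc r ^ q) r)
    (hint : IntegrableOn (fun r => r ^ (d - 1) * (|uc' r| ^ p + uc r ^ (q + 1))) (Ioi 0))
    (Mc C : ℝ)
    (hMc : Mc = ∫ x : EuclideanSpace ℝ (Fin d), (uc ‖x‖) ^ (q + 1))
    (hC : C = θ ^ (-(θ / p)) * (1 - θ) ^ (θ / p) * Mc ^ (-(θ / d))) :
    (∀ u : EuclideanSpace ℝ (Fin d) → ℝ, ContDiff ℝ 1 u →
      Integrable (fun x => |u x| ^ (q + 1)) →
      Integrable (fun x => ‖fderiv ℝ u x‖ ^ p) →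
      ∀ x, |u x| ≤ C * (∫ y, |u y| ^ (q + 1)) ^ ((1 - θ) / (q + 1)) *
        (∫ y, ‖fderiv ℝ u y‖ ^ p) ^ (θ / p)) ∧
    (∀ C' : ℝ, (∀ u : EuclideanSpace ℝ (Fin d) → ℝ, ContDiff ℝ 1 u →
      Integrable (fun x => |u x| ^ (q + 1)) →
      Integrable (fun x => ‖fderiv ℝ u x‖ ^ p) →
      ∀ x, |u x| ≤ C' * (∫ y, |u y| ^ (q + 1)) ^ ((1 - θ) / (q + 1)) *
        (∫ y, ‖fderiv ℝ u y‖ ^ p) ^ (θ / p)) → C ≤ C') := by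
  have H : GNHyp d p q uc uc' :=
    ⟨hd, hp, hq, hderivc, hcc, hmono, hnn, hlim0, hliminf, hode, hint⟩
  have hp1 := H.p_gt_one
  have hd0 : (0:ℝ) < d := by exact_mod_cast hd
  have hM : 0 < Mc := hMc ▸ H.M_pos
  have hpoh := H.pohozaev
  rw [← hMc] at hpoh
  obtain ⟨hA, hC0, hCe⟩ := gn_const hd0 hp hq hθ hM hpoh hC
  set A := ∫ x : EuclideanSpace ℝ (Fin d), |uc' ‖x‖| ^ p with hAdef
  have hp0 : 0 < p := by linarith
  have hpd : 0 < p - d := by linarith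
  have hθp : 0 < θ / p := by rw [hθ]; positivity
  have h1θ : 1 - θ = (p - d) * (q + 1) / (d * p + (p - d) * (q + 1)) := by
    have hD : 0 < d * p + (p - d) * (q + 1) := by positivity
    rw [hθ]; field_simp; ring
  have hθq : 0 < (1 - θ) / (q + 1) := by rw [h1θ]; positivity
  constructor
  · intro u hu h1 h2 x
    set G := ∫ y, ‖fderiv ℝ u y‖ ^ p with hG
    set N := ∫ y, |u y| ^ (q + 1) with hN
    have hG0 : 0 ≤ G := integral_nonneg fun _ => by positivity
    have hN0 : 0 ≤ N := integral_nonneg fun _ => by positivity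
    have hlim : Tendsto (fun δ : ℝ => C * (N + δ) ^ ((1 - θ) / (q + 1)) * (G + δ) ^ (θ / p))
        (𝓝[>] 0) (𝓝 (C * N ^ ((1 - θ) / (q + 1)) * G ^ (θ / p))) := by
      have hc : Continuous (fun δ : ℝ => C * (N + δ) ^ ((1 - θ) / (q + 1)) * (G + δ) ^ (θ / p)) := by
        refine (continuous_const.mul ?_).mul ?_
        · exact (continuous_const.add continuous_id).rpow_const (fun _ => Or.inr hθq.le)
        · exact (continuous_const.add continuous_id).rpow_const (fun _ => Or.inr hθp.le)
      have := hc.tendsto 0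
      simp only [add_zero] at this
      exact this.mono_left nhdsWithin_le_nhds
    refine ge_of_tendsto hlim ?_
    filter_upwards [self_mem_nhdsWithin] with δ hδ
    have hδ : 0 < δ := hδ
    obtain ⟨s, l, hs, hl, e1, e2, e3⟩ := gn_scale hd0 hp hq hθ hA hM
      (show 0 < G + δ by linarith) (show 0 < N + δ by linarith)
    have hb := H.scaled hu h1 h2 x hs hl
    rw [← hMc, ← hAdef, ← hG, ← hN] at hb
    have f1 : s ^ p * l ^ (p - d) * G ≤ A := by
      rw [← e1]; gcongr; linarith
    have f2 : s ^ (q + 1) * l ^ (-(d:ℝ)) * N ≤ Mc := by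
      rw [← e2]; gcongr; linarith
    have f3 : (A + Mc) * (s * |u x|) ≤ (A + Mc) * 1 := by
      refine hb.trans ?_
      have g1 : 1 / p * (s ^ p * l ^ (p - d) * G) ≤ 1 / p * A := by gcongr
      have g2 : 1 / (q + 1) * (s ^ (q + 1) * l ^ (-(d:ℝ)) * N) ≤ 1 / (q + 1) * Mc := by gcongr
      linarith
    have f4 : s * |u x| ≤ 1 := le_of_mul_le_mul_left f3 (by positivity)
    refine le_of_mul_le_mul_left (f4.trans (le_of_eq ?_)) hs
    linear_combination (-C) * e3 - hCe
  · intro C' hC'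
    have hpos : ∀ᶠ r in 𝓝[>] 0, 0 < uc r := hlim0.eventually (lt_mem_nhds one_pos)
    set B := Mc ^ ((1 - θ) / (q + 1)) * A ^ (θ / p) with hB
    have hB0 : 0 < B := by positivity
    have key : ∀ᶠ ε in 𝓝[>] 0, uc ε ≤ C' * B := by
      filter_upwards [self_mem_nhdsWithin, hpos] with ε hε hε2
      obtain ⟨u, huC, hu0, i1, i2, hM', hA'⟩ := H.approx hε
      have := hC' u huC i1 i2 0
      rw [hu0, abs_of_pos hε2] at this
      rw [← hMc] at hM'
      set G := ∫ y, ‖fderiv ℝ u y‖ ^ p with hG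
      set N := ∫ y, |u y| ^ (q + 1) with hN
      have hG0 : 0 ≤ G := integral_nonneg fun _ => by positivity
      have hN0 : 0 ≤ N := integral_nonneg fun _ => by positivity
      have hGN : 0 ≤ N ^ ((1 - θ) / (q + 1)) * G ^ (θ / p) := by positivity
      rw [mul_assoc] at this
      have hC'0 : 0 ≤ C' := by
        by_contra hneg
        push Not at hneg
        have := mul_nonpos_of_nonpos_of_nonneg hneg.le hGN
        linarith
      refine this.trans ?_
      simp only [hB]
      gcongr
    have h1 : 1 ≤ C' * B := le_of_tendsto hlim0 key
    have h2 : C * B = 1 := by rw [← hCe, hB]; ring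
    exact le_of_mul_le_mul_right (h2.trans_le h1) hB0
end
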